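/- Let g be a finite-dimensional non-abelian nilpotent Lie algebra of C^∞ vector fields on an open subset of ℝ³ with center Z(g) = ⟨∂_z⟩ one-dimensional, and let Π be the projection onto the (∂_x, ∂_y)-components. If Π(g) has rank 1 and ker(Π|_g) contains an element whose coefficient has positive degree in x, then ad(∂_x) acting on ker(Π|_g) has exactly one Jordan block, and in suitable local coordinates g = ⟨∂_x⟩ ⋉ A, where A = ker(Π|_g) is the abelian ideal generated under ad(∂_x) by a single element (x^N + φ_1(y)x^{N−1} + ⋯ + φ_N(y))∂_z. -/

import Mathlib

open scoped Classical
noncomputable section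

/-- Vector fields on ℝ^n, viewed as C^∞ maps ℝ^n → ℝ^n. -/
abbrev VF (n : ℕ) := (Fin n → ℝ) → (Fin n → ℝ)

/-- The Lie bracket of vector fields: [v,w](p) = Dw(p)·v(p) − Dv(p)·w(p). -/
def vbr {n : ℕ} (v w : VF n) : VF n :=
  fun p => fderiv ℝ w p (v p) - fderiv ℝ v p (w p)

/-- The i-th coordinate vector field ∂_{x_i}. -/
def dd {n : ℕ} (i : Fin n) : VF n := fun _ => Pi.single i 1

/-- A set of vector fields is abelian if all brackets of its members vanish. -/
def IsAbelianSet {n : ℕ} (S : Set (VF n)) : Prop := ∀ v ∈ S, ∀ w ∈ S, vbr v w = 0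

/-- The lower central series of a (sub)algebra of vector fields. -/
def lcs {n : ℕ} (g : Submodule ℝ (VF n)) : ℕ → Submodule ℝ (VF n)
  | 0 => g
  | j + 1 => Submodule.span ℝ {u | ∃ v ∈ g, ∃ w ∈ lcs g j, u = vbr v w}

/-- Nilpotency: the lower central series terminates. -/
def IsNilpotentVF {n : ℕ} (g : Submodule ℝ (VF n)) : Prop := ∃ j, lcs g j = ⊥

/-- The center of a Lie algebra of vector fields. -/
def centerSet {n : ℕ} (g : Submodule ℝ (VF n)) : Set (VF n) :=
  {v | v ∈ g ∧ ∀ w ∈ g, vbr v w = 0}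

/-- The dimension of the span of the evaluations at `p` of the members of `S`. -/
def evalDim {n : ℕ} (S : Set (VF n)) (p : Fin n → ℝ) : ℕ :=
  Module.finrank ℝ ↥(Submodule.span ℝ ((fun v => v p) '' S))

/-- `S` has rank `r` on `U`: `r` is the maximum over `U` of the dimension of the span of
the evaluations of the members of `S`. -/
def HasRankOn {n : ℕ} (S : Set (VF n)) (U : Set (Fin n → ℝ)) (r : ℕ) : Prop :=
  (∀ p ∈ U, evalDim S p ≤ r) ∧ ∃ p ∈ U, evalDim S p = r

/-- Iterated adjoint action ad(v)^j. -/
def adPow {n : ℕ} (v : VF n) : ℕ → VF n → VF n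
  | 0, w => w
  | j + 1, w => vbr v (adPow v j w)

/-- φ is a C^∞ diffeomorphism from U onto V (a local change of coordinates). -/
def IsDiffeoOn {n : ℕ} (φ : (Fin n → ℝ) → (Fin n → ℝ)) (U V : Set (Fin n → ℝ)) : Prop :=
  IsOpen U ∧ IsOpen V ∧ ContDiffOn ℝ (⊤ : ℕ∞) φ U ∧ Set.BijOn φ U V ∧
    ∃ ψ, ContDiffOn ℝ (⊤ : ℕ∞) ψ V ∧ ∀ p ∈ U, ψ (φ p) = p

/-- The differential of φ transports the vector field v to the vector field w. -/
def Transports {n : ℕ} (φ : (Fin n → ℝ) → (Fin n → ℝ)) (U : Set (Fin n → ℝ))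
    (v w : VF n) : Prop :=
  ∀ p ∈ U, fderiv ℝ φ p (v p) = w (φ p)

/-- A real polynomial function of one variable. -/
def IsPolyFun (f : ℝ → ℝ) : Prop := ∃ P : Polynomial ℝ, ∀ t, f t = Polynomial.eval t P

/-- A real polynomial function of two variables. -/
def IsPoly2 (f : ℝ → ℝ → ℝ) : Prop :=
  ∃ P : MvPolynomial (Fin 2) ℝ, ∀ a b, f a b = MvPolynomial.eval ![a, b] P

/-- Polynomial in the first variable, with C^∞ coefficients in the second variable. -/
def IsPolyInX (f : ℝ → ℝ → ℝ) : Prop :=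
  ∃ N : ℕ, ∃ c : Fin (N + 1) → ℝ → ℝ, (∀ i, ContDiff ℝ (⊤ : ℕ∞) (c i)) ∧
    ∀ a b, f a b = ∑ i : Fin (N + 1), c i b * a ^ (i : ℕ)

/-- `f` genuinely depends on its first variable (has positive degree in x). -/
def DependsOnX (f : ℝ → ℝ → ℝ) : Prop := ∃ a a' b, f a b ≠ f a' b

/-- `f` genuinely depends on its second variable (has positive degree in y). -/
def DependsOnY (f : ℝ → ℝ → ℝ) : Prop := ∃ a b b', f a b ≠ f a b'

/-- The projection Π onto the (∂_x, ∂_y)-components of a vector field on ℝ³. -/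
def Pzl : VF 3 →ₗ[ℝ] VF 3 where
  toFun v := fun p i => if i = 2 then 0 else v p i
  map_add' v w := by funext p i; by_cases h : i = 2 <;> simp [h]
  map_smul' c v := by funext p i; by_cases h : i = 2 <;> simp [h]

/-- The Lie algebra of vector fields generated by a set `S`. -/
def liealgGen {n : ℕ} (S : Set (VF n)) : Submodule ℝ (VF n) :=
  sInf {h : Submodule ℝ (VF n) | S ⊆ ↑h ∧ ∀ v ∈ h, ∀ w ∈ h, vbr v w ∈ h}

section Helpers
open Set Filter Topology MeasureTheory
open scoped ContDiff NNReal

lemma hasFDerivAt_of_partials (f a b : ℝ × ℝ → ℝ)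
    (hda : ∀ t s, HasDerivAt (fun t => f (t, s)) (a (t, s)) t)
    (hdb : ∀ t s, HasDerivAt (fun s => f (t, s)) (b (t, s)) s)
    (ha : Continuous a) (hb : Continuous b) (p : ℝ × ℝ) :
    HasFDerivAt f (a p • ContinuousLinearMap.fst ℝ ℝ ℝ + b p • ContinuousLinearMap.snd ℝ ℝ ℝ) p := by
  have key := hasStrictFDerivAt_uncurry_coprod (𝕜 := ℝ) (u := p) (f := fun t s => f (t, s))
    (f₁ := fun t s => a (t, s) • (1 : ℝ →L[ℝ] ℝ))
    (f₂ := fun t s => b (t, s) • (1 : ℝ →L[ℝ] ℝ))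
    (Eventually.of_forall fun v => by
      have := (hda v.1 v.2).hasFDerivAt
      convert! this using 1
      ext; simp [Function.HasUncurry.uncurry])
    (Eventually.of_forall fun v => by
      have := (hdb v.1 v.2).hasFDerivAt
      convert! this using 1
      ext; simp [Function.HasUncurry.uncurry])
    (by
      have : Continuous fun v : ℝ × ℝ => a v • (1 : ℝ →L[ℝ] ℝ) := by fun_prop
      exact this.continuousAt)
    (by
      have : Continuous fun v : ℝ × ℝ => b v • (1 : ℝ →L[ℝ] ℝ) := by fun_prop
      exact this.continuousAt)
  have := key.hasFDerivAt
  convert! this using 1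

lemma contDiff_succ_of_partials (n : ℕ) (f a b : ℝ × ℝ → ℝ)
    (hda : ∀ t s, HasDerivAt (fun t => f (t, s)) (a (t, s)) t)
    (hdb : ∀ t s, HasDerivAt (fun s => f (t, s)) (b (t, s)) s)
    (ha : ContDiff ℝ n a) (hb : ContDiff ℝ n b) : ContDiff ℝ (n + 1) f := by
  rw [contDiff_succ_iff_hasFDerivAt]
  refine ⟨fun p => a p • ContinuousLinearMap.fst ℝ ℝ ℝ + b p • ContinuousLinearMap.snd ℝ ℝ ℝ, ?_, ?_⟩
  · fun_prop
  · intro p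
    exact hasFDerivAt_of_partials f a b hda hdb ha.continuous hb.continuous p

lemma hasDerivAt_param_integral (F Fs : ℝ × ℝ → ℝ) (t0 t s : ℝ)
    (hF : Continuous F) (hFs : Continuous Fs)
    (hd : ∀ t s, HasDerivAt (fun s => F (t, s)) (Fs (t, s)) s) :
    HasDerivAt (fun s => ∫ τ in t0..t, F (τ, s)) (∫ τ in t0..t, Fs (τ, s)) s := by
  have hK : IsCompact (uIcc t0 t ×ˢ Metric.closedBall s 1) :=
    isCompact_uIcc.prod (isCompact_closedBall s 1)
  obtain ⟨C, hC⟩ := hK.exists_bound_of_continuousOn hFs.continuousOn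
  refine (intervalIntegral.hasDerivAt_integral_of_dominated_loc_of_deriv_le
    (F := fun s τ => F (τ, s)) (F' := fun s τ => Fs (τ, s)) (bound := fun _ => C)
    (Metric.closedBall_mem_nhds s one_pos) ?_ ?_ ?_ ?_ ?_ ?_).2
  · exact Eventually.of_forall fun x =>
      (show Continuous fun τ => F (τ, x) by fun_prop).aestronglyMeasurable
  · exact (show Continuous fun τ => F (τ, s) by fun_prop).intervalIntegrable _ _
  · exact (show Continuous fun τ => Fs (τ, s) by fun_prop).aestronglyMeasurable
  · exact Eventually.of_forall fun τ hτ x hx => hC (τ, x) ⟨uIoc_subset_uIcc hτ, hx⟩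
  · exact intervalIntegrable_const
  · exact Eventually.of_forall fun τ _ x _ => hd τ x

lemma hasDerivAt_prim (F : ℝ × ℝ → ℝ) (t0 t s : ℝ) (hF : Continuous F) :
    HasDerivAt (fun t => ∫ τ in t0..t, F (τ, s)) (F (t, s)) t := by
  have hc : Continuous fun τ => F (τ, s) := by fun_prop
  exact intervalIntegral.integral_hasDerivAt_right (hc.intervalIntegrable _ _)
    (hc.stronglyMeasurableAtFilter _ _) hc.continuousAt

lemma continuous_prim (F : ℝ × ℝ → ℝ) (t0 : ℝ) (hF : Continuous F) :
    Continuous (fun p : ℝ × ℝ => ∫ τ in t0..p.1, F (τ, p.2)) := by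
  apply intervalIntegral.continuous_parametric_intervalIntegral_of_continuous
    (f := fun (p : ℝ × ℝ) τ => F (τ, p.2)) _ continuous_fst
  unfold Function.uncurry; fun_prop

lemma partial_snd {n : WithTop ℕ∞} (F : ℝ × ℝ → ℝ) (hF : ContDiff ℝ n F) (hn : n ≠ 0) (t s : ℝ) :
    HasDerivAt (fun s => F (t, s)) (fderiv ℝ F (t, s) (0, 1)) s := by
  have h1 : HasFDerivAt F (fderiv ℝ F (t, s)) (t, s) :=
    (hF.differentiable hn _).hasFDerivAt
  have h2 : HasDerivAt (fun s : ℝ => (t, s)) ((0 : ℝ), (1 : ℝ)) s :=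
    (hasDerivAt_const s t).prodMk (hasDerivAt_id s)
  exact h1.comp_hasDerivAt s h2

lemma contDiff_prim_nat (n : ℕ) : ∀ (F : ℝ × ℝ → ℝ) (t0 : ℝ) (_ : ContDiff ℝ n F),
    ContDiff ℝ n (fun p : ℝ × ℝ => ∫ τ in t0..p.1, F (τ, p.2)) := by
  induction n with
  | zero =>
    intro F t0 hF
    exact contDiff_zero.2 (continuous_prim F t0 hF.continuous)
  | succ n ih =>
    intro F t0 hF
    have hFs : ContDiff ℝ n (fun p => fderiv ℝ F p (0, 1)) := by
      have := hF.fderiv_right (m := n) (by norm_cast)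
      fun_prop
    push_cast
    refine contDiff_succ_of_partials n _ F
      (fun p => ∫ τ in t0..p.1, fderiv ℝ F (τ, p.2) (0, 1)) ?_ ?_ ?_ (ih _ t0 hFs)
    · intro t s
      exact hasDerivAt_prim F t0 t s hF.continuous
    · intro t s
      exact hasDerivAt_param_integral F _ t0 t s hF.continuous hFs.continuous
        (fun t s => partial_snd F hF (by norm_cast) t s)
    · exact hF.of_le (by norm_cast; simp)

lemma contDiff_prim (F : ℝ × ℝ → ℝ) (t0 : ℝ) (hF : ContDiff ℝ ∞ F) :
    ContDiff ℝ ∞ (fun p : ℝ × ℝ => ∫ τ in t0..p.1, F (τ, p.2)) := by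
  rw [contDiff_infty] at hF ⊢
  exact fun n => contDiff_prim_nat n F t0 (hF n)

/-- global solution of the scalar ODE with compactly supported right-hand side -/
lemma exists_global_sol (q : ℝ × ℝ → ℝ) (hq : ContDiff ℝ ∞ q) (hc : HasCompactSupport q)
    (t0 s : ℝ) : ∃ y : ℝ → ℝ, y t0 = s ∧ ∀ t, HasDerivAt y (q (t, y t)) t := by
  obtain ⟨K, hK⟩ := (hq.of_le (m := 1) (by norm_cast)).lipschitzWith_of_hasCompactSupport hc (by simp)
  obtain ⟨L, hL⟩ := hc.exists_bound_of_continuous hq.continuous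
  obtain ⟨T, hTpos, hT⟩ := hc.isCompact.isBounded.subset_closedBall_lt 0 (t0, 0)
  have hL0 : 0 ≤ L := (norm_nonneg _).trans (hL 0)
  have hz : ∀ t y, t ∉ Icc (t0 - T) (t0 + T) → q (t, y) = 0 := by
    intro t y ht
    by_contra h
    have := hT (subset_tsupport _ h)
    rw [Metric.mem_closedBall, Prod.dist_eq] at this
    have h2 := (le_max_left _ _).trans this
    simp only [Real.dist_eq, abs_le] at h2
    exact ht ⟨by linarith, by linarith⟩
  let tt : Icc (t0 - T) (t0 + T) := ⟨t0, by constructor <;> linarith⟩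
  have hpl : IsPicardLindelof (fun t y => q (t, y)) tt s ⟨L * T, by positivity⟩ 0 ⟨L, hL0⟩ K := by
    constructor
    · intro t _
      have : LipschitzWith K fun y : ℝ => q (t, y) := by
        have := hK.comp (LipschitzWith.prodMk_left (β := ℝ) t)
        rw [mul_one] at this; exact this
      exact this.lipschitzOnWith
    · intro x _
      have := hq.continuous
      fun_prop
    · intro t _ x _
      exact hL _
    · change L * max (t0 + T - t0) (t0 - (t0 - T)) ≤ L * T - 0
      simp
  obtain ⟨α, hα0, hα⟩ := hpl.exists_eq_forall_mem_Icc_hasDerivWithinAt₀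
  have hαc : ContinuousOn α (Icc (t0 - T) (t0 + T)) := fun t ht => (hα t ht).continuousWithinAt
  have hle : t0 - T ≤ t0 + T := by linarith
  let β : ℝ → ℝ := IccExtend hle ((Icc (t0 - T) (t0 + T)).domRestrict α)
  have hβ : Continuous β := (continuousOn_iff_continuous_domRestrict.1 hαc).Icc_extend'
  have hβα : ∀ t ∈ Icc (t0 - T) (t0 + T), β t = α t := fun t ht => by
    simp only [β, IccExtend_of_mem _ _ ht, domRestrict_apply]
  have hqc := hq.continuous
  have hint : Continuous fun τ => q (τ, β τ) := by fun_prop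
  let y : ℝ → ℝ := fun t => s + ∫ τ in t0..t, q (τ, β τ)
  have hy : ∀ t, HasDerivAt y (q (t, β t)) t := fun t =>
    (intervalIntegral.integral_hasDerivAt_right (hint.intervalIntegrable _ _)
      (hint.stronglyMeasurableAtFilter _ _) hint.continuousAt).const_add s
  have hyβ : ∀ t ∈ Icc (t0 - T) (t0 + T), y t = β t := by
    intro t ht
    have hsub : uIcc t0 t ⊆ Icc (t0 - T) (t0 + T) := by
      apply uIcc_subset_Icc tt.2 ht
    have := intervalIntegral.integral_eq_sub_of_hasDeriv_right (f := β) (f' := fun τ => q (τ, β τ))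
      (a := t0) (b := t) hβ.continuousOn ?_ (hint.intervalIntegrable _ _)
    · simp only [y, this, hβα _ ht]
      have : α t0 = s := hα0
      rw [show (tt : ℝ) = t0 from rfl] at *
      rw [hβα t0 tt.2, this]; ring
    · intro τ hτ
      have hτ' : τ ∈ Ioo (t0 - T) (t0 + T) := by
        constructor
        · exact lt_of_le_of_lt (le_min tt.2.1 ht.1) hτ.1
        · exact lt_of_lt_of_le hτ.2 (max_le tt.2.2 ht.2)
      have h1 := (hα τ (Ioo_subset_Icc_self hτ')).hasDerivAt (Icc_mem_nhds hτ'.1 hτ'.2)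
      have h2 : β =ᶠ[𝓝 τ] α := by
        filter_upwards [Icc_mem_nhds hτ'.1 hτ'.2] with x hx using hβα x hx
      have h3 := h1.congr_of_eventuallyEq h2
      rw [← hβα τ (Ioo_subset_Icc_self hτ')] at h3
      exact h3.hasDerivWithinAt
  refine ⟨y, by simp [y], fun t => ?_⟩
  by_cases ht : t ∈ Icc (t0 - T) (t0 + T)
  · rw [hyβ t ht]; exact hy t
  · rw [hz t _ ht]; have := hy t; rwa [hz t _ ht] at this

lemma diff_eq_integral (q : ℝ × ℝ → ℝ) (hq : ContDiff ℝ ∞ q) (t a b : ℝ) :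
    q (t, b) - q (t, a) = (∫ θ in (0:ℝ)..1, fderiv ℝ q (t, a + θ * (b - a)) (0, 1)) * (b - a) := by
  have hd : ∀ θ : ℝ, HasDerivAt (fun θ => q (t, a + θ * (b - a)))
      (fderiv ℝ q (t, a + θ * (b - a)) (0, 1) * (b - a)) θ := by
    intro θ
    have h1 := partial_snd q hq (by simp) t (a + θ * (b - a))
    have h2 : HasDerivAt (fun θ : ℝ => a + θ * (b - a)) (b - a) θ := by
      simpa using ((hasDerivAt_id θ).mul_const (b - a)).const_add a
    exact h1.comp θ h2
  have hc : Continuous (fun p => fderiv ℝ q p (0, 1)) :=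
    (hq.continuous_fderiv (by simp)).clm_apply continuous_const
  have h := intervalIntegral.integral_eq_sub_of_hasDerivAt (a := 0) (b := 1) (fun θ _ => hd θ)
    ((show Continuous fun θ : ℝ => fderiv ℝ q (t, a + θ * (b - a)) (0, 1) * (b - a) by
      fun_prop).intervalIntegrable _ _)
  rw [intervalIntegral.integral_mul_const] at h
  rw [h]; simp

/-- smooth flow of scalar ODE -/
lemma exists_flow (q : ℝ × ℝ → ℝ) (hq : ContDiff ℝ ∞ q) (hc : HasCompactSupport q)
    (t0 : ℝ) : ∃ Φ : ℝ × ℝ → ℝ, ContDiff ℝ ∞ Φ ∧ (∀ s, Φ (t0, s) = s) ∧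
      (∀ t s, HasDerivAt (fun t => Φ (t, s)) (q (t, Φ (t, s))) t) := by
  choose y hy0 hy using exists_global_sol q hq hc t0
  obtain ⟨K, hK⟩ := (hq.of_le (m := 1) (by norm_cast)).lipschitzWith_of_hasCompactSupport hc (by simp)
  obtain ⟨L, hL⟩ := hc.exists_bound_of_continuous hq.continuous
  have hqc := hq.continuous
  have hqyc : Continuous (fun p => fderiv ℝ q p (0, 1)) :=
    (hq.continuous_fderiv (by simp)).clm_apply continuous_const
  have hKb : ∀ p, ‖fderiv ℝ q p (0, 1)‖ ≤ K := by
    intro p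
    have h1 := norm_fderiv_le_of_lipschitz ℝ hK (x₀ := p)
    have h2 := (fderiv ℝ q p).le_opNorm (0, 1)
    have h3 : ‖((0 : ℝ), (1 : ℝ))‖ = 1 := by simp [Prod.norm_def]
    rw [h3, mul_one] at h2
    exact h2.trans h1
  let G : ℝ → ℝ → ℝ → ℝ := fun t a b => ∫ θ in (0:ℝ)..1, fderiv ℝ q (t, a + θ * (b - a)) (0, 1)
  have hG : Continuous fun x : ℝ × ℝ × ℝ => G x.1 x.2.1 x.2.2 := by
    apply intervalIntegral.continuous_parametric_intervalIntegral_of_continuous'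
      (f := fun (x : ℝ × ℝ × ℝ) θ => fderiv ℝ q (x.1, x.2.1 + θ * (x.2.2 - x.2.1)) (0, 1))
    unfold Function.uncurry
    fun_prop
  have hGb : ∀ t a b, ‖G t a b‖ ≤ K := by
    intro t a b
    have := intervalIntegral.norm_integral_le_of_norm_le_const (a := (0:ℝ)) (b := 1) (C := K)
      (f := fun θ => fderiv ℝ q (t, a + θ * (b - a)) (0, 1)) (fun θ _ => hKb _)
    simpa using this
  have hyc : ∀ s, Continuous (y s) := fun s =>
    continuous_iff_continuousAt.2 fun t => (hy s t).continuousAt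
  -- exact difference formula
  have hdiff : ∀ t a b, y b t - y a t = (b - a) * Real.exp (∫ τ in t0..t, G τ (y a τ) (y b τ)) := by
    intro t a b
    have hyca := hyc a
    have hycb := hyc b
    have hgc : Continuous fun τ => G τ (y a τ) (y b τ) :=
      hG.comp (continuous_id.prodMk (hyca.prodMk hycb))
    have hI : ∀ t, HasDerivAt (fun t => ∫ τ in t0..t, G τ (y a τ) (y b τ)) (G t (y a t) (y b t)) t :=
      fun t => intervalIntegral.integral_hasDerivAt_right (hgc.intervalIntegrable _ _)
        (hgc.stronglyMeasurableAtFilter _ _) hgc.continuousAt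
    have hder : ∀ t, HasDerivAt (fun t => (y b t - y a t) *
        Real.exp (-(∫ τ in t0..t, G τ (y a τ) (y b τ)))) 0 t := by
      intro t
      have h1 := ((hy b t).sub (hy a t)).mul ((hI t).neg.exp)
      convert! h1 using 1
      rw [diff_eq_integral q hq]
      simp only [G, Pi.sub_apply]
      ring
    have hconst := is_const_of_deriv_eq_zero (fun t => (hder t).differentiableAt)
      (fun t => (hder t).deriv) t t0
    simp only [intervalIntegral.integral_same, hy0, neg_zero, Real.exp_zero, mul_one] at hconst
    rw [← hconst, mul_assoc, ← Real.exp_add]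
    simp
  let Φ : ℝ × ℝ → ℝ := fun p => y p.2 p.1
  have hΦc : Continuous Φ := by
    have hlip : ∀ s, LipschitzWith ⟨L, (norm_nonneg _).trans (hL 0)⟩ (y s) := by
      intro s
      apply lipschitzWith_of_nnnorm_deriv_le (fun t => (hy s t).differentiableAt)
      intro t
      rw [(hy s t).deriv]
      exact hL _
    rw [continuous_iff_continuousAt]
    rintro ⟨t, s⟩
    rw [ContinuousAt, tendsto_iff_dist_tendsto_zero]
    have hbd : ∀ p : ℝ × ℝ, dist (Φ p) (Φ (t, s)) ≤ L * |p.1 - t| +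
        |p.2 - s| * Real.exp (K * |t - t0|) := by
      intro p
      have h1 : dist (Φ p) (Φ (t, p.2)) ≤ L * |p.1 - t| := by
        have := (hlip p.2).dist_le_mul p.1 t
        exact this
      have h2 : dist (Φ (t, p.2)) (Φ (t, s)) ≤ |p.2 - s| * Real.exp (K * |t - t0|) := by
        rw [Real.dist_eq]
        simp only [Φ]
        rw [hdiff t s p.2, abs_mul, Real.abs_exp]
        gcongr
        refine (le_abs_self _).trans ?_
        exact intervalIntegral.norm_integral_le_of_norm_le_const (fun τ _ => hGb _ _ _)
      exact (dist_triangle _ _ _).trans (add_le_add h1 h2)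
    refine squeeze_zero (fun _ => dist_nonneg) hbd ?_
    have : Continuous fun p : ℝ × ℝ => L * |p.1 - t| + |p.2 - s| * Real.exp (K * |t - t0|) := by
      fun_prop
    have := this.tendsto (t, s)
    simpa using this
  have hΦt : ∀ t s, HasDerivAt (fun t => Φ (t, s)) (q (t, Φ (t, s))) t := fun t s => hy s t
  have hG0 : ∀ t a, G t a a = fderiv ℝ q (t, a) (0, 1) := by intro t a; simp [G]
  let E : ℝ × ℝ → ℝ := fun p => Real.exp (∫ τ in t0..p.1, fderiv ℝ q (τ, Φ (τ, p.2)) (0, 1))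
  have hΦs : ∀ t s, HasDerivAt (fun s => Φ (t, s)) (E (t, s)) s := by
    intro t s
    rw [hasDerivAt_iff_tendsto_slope]
    have hcont : Continuous fun b => Real.exp (∫ τ in t0..t, G τ (y s τ) (y b τ)) := by
      apply Real.continuous_exp.comp
      apply intervalIntegral.continuous_parametric_intervalIntegral_of_continuous'
        (f := fun b τ => G τ (y s τ) (y b τ))
      have h1 : Continuous fun x : ℝ × ℝ => (x.2, Φ (x.2, s), Φ (x.2, x.1)) := by fun_prop
      exact hG.comp h1
    have h2 : Tendsto (fun b => Real.exp (∫ τ in t0..t, G τ (y s τ) (y b τ))) (𝓝[≠] s)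
        (𝓝 (E (t, s))) := by
      have := (hcont.tendsto s).mono_left (nhdsWithin_le_nhds (s := {s}ᶜ))
      simp only [hG0] at this
      exact this
    refine h2.congr' ?_
    filter_upwards [self_mem_nhdsWithin] with b hb
    rw [slope_def_field]
    simp only [Φ]
    rw [hdiff t s b, mul_comm, mul_div_assoc, div_self (sub_ne_zero.2 hb), mul_one]
  refine ⟨Φ, ?_, fun s => hy0 s, hΦt⟩
  rw [contDiff_infty]
  intro n
  induction n with
  | zero => exact contDiff_zero.2 hΦc
  | succ n ih =>
    push_cast
    have hpair : ContDiff ℝ n fun p : ℝ × ℝ => (p.1, Φ p) := contDiff_fst.prodMk ih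
    refine contDiff_succ_of_partials n Φ (fun p => q (p.1, Φ p)) E hΦt hΦs ?_ ?_
    · exact (hq.of_le (by norm_cast; simp)).comp hpair
    · apply ContDiff.exp
      have hfy : ContDiff ℝ n (fun p => fderiv ℝ q p (0, 1)) := by
        have := (hq.of_le (m := ((n + 1 : ℕ) : WithTop ℕ∞)) (by norm_cast; simp)).fderiv_right (m := n) (by norm_cast)
        fun_prop
      exact contDiff_prim_nat n (fun p => fderiv ℝ q (p.1, Φ p) (0, 1)) t0 (hfy.comp hpair)

lemma cutoff_ext {E : Type*} [NormedAddCommGroup E] [NormedSpace ℝ E] [HasContDiffBump E]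
    [FiniteDimensional ℝ E] (f : E → ℝ) (a : E) (ε : ℝ) (hε : 0 < ε)
    (hf : ∀ p ∈ Metric.ball a ε, ContDiffAt ℝ ∞ f p) :
    ∃ g : E → ℝ, ContDiff ℝ ∞ g ∧ HasCompactSupport g ∧ ∀ p ∈ Metric.ball a (ε / 4), g p = f p := by
  let χ : ContDiffBump a := ⟨ε / 4, ε / 2, by linarith, by linarith⟩
  refine ⟨fun p => χ p * f p, ?_, ?_, ?_⟩
  · rw [contDiff_iff_contDiffAt]
    intro p
    by_cases hp : p ∈ Metric.ball a ε
    · exact χ.contDiffAt.mul (hf p hp)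
    · have hp' : p ∉ tsupport χ := by
        rw [χ.tsupport_eq]
        intro h
        apply hp
        rw [Metric.mem_closedBall] at h
        rw [Metric.mem_ball]
        exact lt_of_le_of_lt h (show ε / 2 < ε by linarith)
      have h0 : (fun p => χ p * f p) =ᶠ[𝓝 p] fun _ => 0 := by
        filter_upwards [notMem_tsupport_iff_eventuallyEq.1 hp'] with x hx
        rw [hx]; simp
      exact contDiffAt_const.congr_of_eventuallyEq h0
  · exact χ.hasCompactSupport.mul_right
  · intro p hp
    have : χ p = 1 := χ.one_of_mem_closedBall (Metric.ball_subset_closedBall hp)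
    simp [this]

lemma cutoff_ext' {E : Type*} [NormedAddCommGroup E] [NormedSpace ℝ E] [HasContDiffBump E]
    [FiniteDimensional ℝ E] (f : E → ℝ) (a : E)
    (hf : ∀ᶠ p in 𝓝 a, ContDiffAt ℝ ∞ f p) :
    ∃ g : E → ℝ, ContDiff ℝ ∞ g ∧ HasCompactSupport g ∧ g =ᶠ[𝓝 a] f := by
  obtain ⟨ε, hε, h⟩ := Metric.eventually_nhds_iff_ball.1 hf
  obtain ⟨g, h1, h2, h3⟩ := cutoff_ext f a ε hε h
  exact ⟨g, h1, h2, Metric.eventually_nhds_iff_ball.2 ⟨ε / 4, by linarith, h3⟩⟩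

lemma inv_fun {E : Type*} [NormedAddCommGroup E] [NormedSpace ℝ E]
    [FiniteDimensional ℝ E] (f : E → E) (a : E)
    (hf : ∀ᶠ p in 𝓝 a, ContDiffAt ℝ ∞ f p) (hinj : ∀ v, fderiv ℝ f a v = 0 → v = 0) :
    ∃ e : OpenPartialHomeomorph E E, (∀ p, e p = f p) ∧ a ∈ e.source ∧
      (∀ p ∈ e.source, ContDiffAt ℝ ∞ f p) ∧ ∀ q ∈ e.target, ContDiffAt ℝ ∞ e.symm q := by
  have hfa : ContDiffAt ℝ ∞ f a := hf.self_of_nhds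
  have := FiniteDimensional.complete ℝ E
  let A : E ≃L[ℝ] E := (LinearEquiv.ofInjectiveEndo (fderiv ℝ f a : E →ₗ[ℝ] E)
    ((injective_iff_map_eq_zero _).2 hinj)).toContinuousLinearEquiv
  have hA : (A : E →L[ℝ] E) = fderiv ℝ f a := by ext v; rfl
  have hcont : ContinuousAt (fderiv ℝ f) a :=
    (hfa.fderiv_right (m := 0) (by simp)).continuousAt
  have hinv : ∀ᶠ p in 𝓝 a, fderiv ℝ f p ∈ range ((↑) : (E ≃L[ℝ] E) → E →L[ℝ] E) := by
    apply hcont.eventually_mem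
    rw [← hA]
    exact ContinuousLinearEquiv.nhds A
  have hfA : HasFDerivAt f (A : E →L[ℝ] E) a := by
    rw [hA]; exact (hfa.differentiableAt (by simp)).hasFDerivAt
  let e0 := hfa.toOpenPartialHomeomorph f hfA (by simp)
  obtain ⟨W, hW, hWo, haW⟩ := eventually_nhds_iff.1 (hf.and hinv)
  let e := e0.restrOpen W hWo
  refine ⟨e, fun p => rfl, ⟨hfa.mem_toOpenPartialHomeomorph_source hfA (by simp), haW⟩,
    fun p hp => (hW p hp.2).1, ?_⟩
  intro q hq
  have hp := e.map_target hq
  obtain ⟨h1, B, hB⟩ := hW _ hp.2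
  apply e.contDiffAt_symm (f₀' := B) hq
  · rw [hB]; exact (h1.differentiableAt (by simp)).hasFDerivAt
  · exact h1

lemma first_integral (P Q R : ℝ × ℝ → ℝ) (hP : ContDiff ℝ ∞ P) (hQ : ContDiff ℝ ∞ Q)
    (hR : ContDiff ℝ ∞ R) (p0 : ℝ × ℝ) (hp0 : P p0 ≠ 0) :
    ∃ h r : ℝ × ℝ → ℝ, (∀ᶠ p in 𝓝 p0, ContDiffAt ℝ ∞ h p ∧ ContDiffAt ℝ ∞ r p ∧
      fderiv ℝ h p (P p, Q p) = 0 ∧ fderiv ℝ r p (P p, Q p) = R p) ∧ fderiv ℝ h p0 ≠ 0 := by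
  have hPne : ∀ᶠ p in 𝓝 p0, P p ≠ 0 := hP.continuous.continuousAt.eventually_ne hp0
  obtain ⟨q, hq, hqc, hqe⟩ := cutoff_ext' (fun p => Q p / P p) p0 (by
    filter_upwards [hPne] with p hp using hQ.contDiffAt.div hP.contDiffAt hp)
  obtain ⟨ρ, hρ, -, hρe⟩ := cutoff_ext' (fun p => R p / P p) p0 (by
    filter_upwards [hPne] with p hp using hR.contDiffAt.div hP.contDiffAt hp)
  obtain ⟨Φ, hΦ, hΦ0, hΦt⟩ := exists_flow q hq hqc p0.1
  let E : ℝ × ℝ → ℝ × ℝ := fun p => (p.1, Φ p)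
  have hE : ContDiff ℝ ∞ E := contDiff_fst.prodMk hΦ
  have hEp0 : E p0 = p0 := by
    change (p0.1, Φ (p0.1, p0.2)) = p0
    rw [hΦ0]
  have hEd : ∀ p, fderiv ℝ E p = (ContinuousLinearMap.fst ℝ ℝ ℝ).prod (fderiv ℝ Φ p) := fun p =>
    (hasFDerivAt_fst.prodMk (hΦ.differentiable (by simp) p).hasFDerivAt).fderiv
  have hΦ01 : fderiv ℝ Φ p0 (0, 1) = 1 := by
    have h1 := partial_snd Φ hΦ (by simp) p0.1 p0.2
    have h2 : (fun s => Φ (p0.1, s)) = fun s => s := funext hΦ0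
    rw [h2] at h1
    exact h1.unique (hasDerivAt_id _)
  have hΦ10 : ∀ p, fderiv ℝ Φ p (1, 0) = q (E p) := by
    rintro ⟨t, s⟩
    have h1 : HasFDerivAt Φ (fderiv ℝ Φ (t, s)) (t, s) :=
      (hΦ.differentiable (by simp) _).hasFDerivAt
    have h2 : HasDerivAt (fun t : ℝ => (t, s)) ((1 : ℝ), (0 : ℝ)) t :=
      (hasDerivAt_id t).prodMk (hasDerivAt_const t s)
    exact (h1.comp_hasDerivAt t h2).unique (hΦt t s)
  have hE10 : ∀ p, fderiv ℝ E p (1, 0) = (1, q (E p)) := by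
    intro p; rw [hEd]; simp [hΦ10]
  obtain ⟨e, hee, hae, -, hsymm⟩ := inv_fun E p0 (Eventually.of_forall fun p => hE.contDiffAt) (by
    rintro ⟨a, b⟩ hv
    rw [hEd] at hv
    have ha : a = 0 := by simpa using congrArg Prod.fst hv
    subst ha
    have hb : fderiv ℝ Φ p0 (0, b) = 0 := by simpa using congrArg Prod.snd hv
    have : ((0 : ℝ), b) = b • ((0 : ℝ), (1 : ℝ)) := by simp
    rw [this, map_smul, hΦ01] at hb
    simp at hb
    rw [hb]; rfl)
  have hp0t : p0 ∈ e.target := by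
    have := e.map_source hae
    rwa [hee, hEp0] at this
  let rt : ℝ × ℝ → ℝ := fun p => ∫ τ in p0.1..p.1, ρ (E (τ, p.2))
  have hrt : ContDiff ℝ ∞ rt := contDiff_prim (fun p => ρ (E p)) p0.1 (hρ.comp hE)
  have hrt10 : ∀ p, fderiv ℝ rt p (1, 0) = ρ (E p) := by
    rintro ⟨t, s⟩
    have h1 : HasFDerivAt rt (fderiv ℝ rt (t, s)) (t, s) :=
      (hrt.differentiable (by simp) _).hasFDerivAt
    have h2 : HasDerivAt (fun t : ℝ => (t, s)) ((1 : ℝ), (0 : ℝ)) t :=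
      (hasDerivAt_id t).prodMk (hasDerivAt_const t s)
    have h3 := h1.comp_hasDerivAt t h2
    exact h3.unique
      (hasDerivAt_prim (fun p => ρ (E p)) p0.1 t s (hρ.comp hE).continuous)
  -- generic: derivative of k ∘ e.symm
  have gen : ∀ k : ℝ × ℝ → ℝ, ContDiff ℝ ∞ k → ∀ p ∈ e.target, ∀ v,
      fderiv ℝ (fun p => k (e.symm p)) p (fderiv ℝ E (e.symm p) v) = fderiv ℝ k (e.symm p) v := by
    intro k hk p hp v
    have hps := e.map_target hp
    have hEe : E (e.symm p) = p := by rw [← hee]; exact e.right_inv hp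
    have hd : DifferentiableAt ℝ (fun p => k (e.symm p)) (E (e.symm p)) := by
      rw [hEe]
      exact (hk.contDiffAt.comp p (hsymm p hp)).differentiableAt (by simp)
    have hcomp := hd.hasFDerivAt.comp (e.symm p) (hE.differentiable (by simp) (e.symm p)).hasFDerivAt
    have heq : ((fun p => k (e.symm p)) ∘ E) =ᶠ[𝓝 (e.symm p)] k := by
      filter_upwards [e.open_source.mem_nhds hps] with x hx
      simp only [Function.comp]
      rw [← hee, e.left_inv hx]
    have := (hcomp.congr_of_eventuallyEq heq.symm).unique
      (hk.differentiable (by simp) (e.symm p)).hasFDerivAt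
    rw [← this, hEe]
    rfl
  have hfin : ∀ k : ℝ × ℝ → ℝ, ContDiff ℝ ∞ k → ∀ p ∈ e.target, P p ≠ 0 → q p = Q p / P p →
      fderiv ℝ (fun p => k (e.symm p)) p (P p, Q p) = P p * fderiv ℝ k (e.symm p) (1, 0) := by
    intro k hk p hp hPp hqp
    have h1 := gen k hk p hp (1, 0)
    have hEe : E (e.symm p) = p := by rw [← hee]; exact e.right_inv hp
    rw [hE10, hEe] at h1
    have : (P p, Q p) = P p • ((1 : ℝ), q p) := by
      rw [hqp]; ext <;> simp; field_simp
    rw [this, map_smul, h1, smul_eq_mul]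
  refine ⟨fun p => (e.symm p).2, fun p => rt (e.symm p), ?_, ?_⟩
  · filter_upwards [e.open_target.mem_nhds hp0t, hPne, hqe, hρe] with p hp hPp hqp hρp
    refine ⟨contDiff_snd.contDiffAt.comp p (hsymm p hp), hrt.contDiffAt.comp p (hsymm p hp), ?_, ?_⟩
    · rw [hfin Prod.snd contDiff_snd p hp hPp hqp, fderiv_snd]; simp
    · have hEe : E (e.symm p) = p := by rw [← hee]; exact e.right_inv hp
      rw [hfin rt hrt p hp hPp hqp, hrt10, hEe, hρp]; field_simp
  · intro h0
    have h1 := gen Prod.snd contDiff_snd p0 hp0t (0, 1)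
    rw [h0, fderiv_snd] at h1
    simp at h1

/-- first integral, nonvanishing planar vector field -/
lemma first_integral' (P Q R : ℝ × ℝ → ℝ) (hP : ContDiff ℝ ∞ P) (hQ : ContDiff ℝ ∞ Q)
    (hR : ContDiff ℝ ∞ R) (p0 : ℝ × ℝ) (hp0 : P p0 ≠ 0 ∨ Q p0 ≠ 0) :
    ∃ h r : ℝ × ℝ → ℝ, (∀ᶠ p in 𝓝 p0, ContDiffAt ℝ ∞ h p ∧ ContDiffAt ℝ ∞ r p ∧
      fderiv ℝ h p (P p, Q p) = 0 ∧ fderiv ℝ r p (P p, Q p) = R p) ∧ fderiv ℝ h p0 ≠ 0 := by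
  rcases hp0 with hp0 | hp0
  · exact first_integral P Q R hP hQ hR p0 hp0
  · let S : (ℝ × ℝ) ≃L[ℝ] (ℝ × ℝ) := ContinuousLinearEquiv.prodComm ℝ ℝ ℝ
    have hS : ContDiff ℝ ∞ S := S.contDiff
    obtain ⟨h, r, hev, hne⟩ := first_integral (Q ∘ S) (P ∘ S) (R ∘ S) (hQ.comp hS) (hP.comp hS)
      (hR.comp hS) (S p0) hp0
    have hSS : ∀ p, S (S p) = p := fun p => rfl
    have hev' : ∀ᶠ p in 𝓝 p0, _ := S.continuous.continuousAt.eventually hev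
    have hfd : ∀ (k : ℝ × ℝ → ℝ) p v, fderiv ℝ (k ∘ S) p v = fderiv ℝ k (S p) (S v) := by
      intro k p v
      rw [ContinuousLinearEquiv.comp_right_fderiv]; rfl
    refine ⟨h ∘ S, r ∘ S, ?_, ?_⟩
    · filter_upwards [hev'] with p hp
      obtain ⟨h1, h2, h3, h4⟩ := hp
      refine ⟨h1.comp p hS.contDiffAt, h2.comp p hS.contDiffAt, ?_, ?_⟩
      · rw [hfd]; exact h3
      · rw [hfd]; exact h4
    · intro h0
      apply hne
      refine ContinuousLinearMap.ext fun v => ?_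
      have h5 := hfd h p0 (S v)
      rw [h0, hSS] at h5
      exact h5.symm

abbrev E3 := Fin 3 → ℝ

lemma vbr_anti (v w : VF 3) : vbr v w = -vbr w v := by
  funext p; simp [vbr]

lemma vbr_add_right (x v w : VF 3) (hv : Differentiable ℝ v) (hw : Differentiable ℝ w) :
    vbr x (v + w) = vbr x v + vbr x w := by
  funext p
  simp only [vbr, Pi.add_apply]
  rw [fderiv_add (hv p) (hw p), map_add]
  simp only [ContinuousLinearMap.add_apply]
  abel

lemma vbr_smul_right (x v : VF 3) (c : ℝ) (hv : Differentiable ℝ v) :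
    vbr x (c • v) = c • vbr x v := by
  funext p
  simp only [vbr, Pi.smul_apply]
  rw [fderiv_const_smul (hv p), map_smul]
  simp only [ContinuousLinearMap.smul_apply, smul_sub]

lemma vbr_zero_right (x : VF 3) : vbr x 0 = 0 := by
  funext p
  simp [vbr]

/-- independence of the third coordinate -/
def ZIndep {F : Type*} (v : E3 → F) : Prop := ∀ p p', p 0 = p' 0 → p 1 = p' 1 → v p = v p'

lemma zindep_fderiv {F : Type*} [NormedAddCommGroup F] [NormedSpace ℝ F] (v : E3 → F)
    (hv : ZIndep v) (p x : E3) (h0 : x 0 = 0) (h1 : x 1 = 0) : fderiv ℝ v p x = 0 := by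
  by_cases hd : DifferentiableAt ℝ v p
  · have h2 : HasDerivAt (fun t : ℝ => p + t • x) x 0 := by
      simpa using ((hasDerivAt_id (0 : ℝ)).smul_const x).const_add p
    have h3 : HasFDerivAt v (fderiv ℝ v p) (p + (0 : ℝ) • x) := by simpa using hd.hasFDerivAt
    have h4 := h3.comp_hasDerivAt (0 : ℝ) h2
    have h5 : (v ∘ fun t : ℝ => p + t • x) = fun _ => v p := by
      funext t
      apply hv <;> simp [h0, h1]
    rw [h5] at h4
    exact h4.unique (hasDerivAt_const _ _)
  · rw [fderiv_zero_of_not_differentiableAt hd]; rfl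

lemma fderiv_comp_apply (v : VF 3) (hv : Differentiable ℝ v) (p x : E3) (i : Fin 3) :
    fderiv ℝ v p x i = fderiv ℝ (fun p => v p i) p x := by
  rw [fderiv_apply (hv p)]; rfl

lemma fderiv_zero_of_open {F : Type*} [NormedAddCommGroup F] [NormedSpace ℝ F] (v : E3 → F)
    (W : Set E3) (hW : IsOpen W) (h : ∀ p ∈ W, v p = 0) (p : E3) (hp : p ∈ W) :
    fderiv ℝ v p = 0 := by
  have : v =ᶠ[𝓝 p] fun _ => (0 : F) := by
    filter_upwards [hW.mem_nhds hp] with x hx using h x hx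
  rw [this.fderiv_eq]; simp

lemma vbr_open_zero (x v : VF 3) (W : Set E3) (hW : IsOpen W) (h : ∀ p ∈ W, v p = 0) :
    ∀ p ∈ W, vbr x v p = 0 := by
  intro p hp
  simp [vbr, fderiv_zero_of_open v W hW h p hp, h p hp]

/-- first two components vanish on W -/
def HorZero (W : Set E3) (v : VF 3) : Prop := ∀ p ∈ W, v p 0 = 0 ∧ v p 1 = 0

lemma vbr_horzero (x v : VF 3) (hx : ZIndep x) (hv : Differentiable ℝ v) (W : Set E3)
    (hW : IsOpen W) (h : HorZero W v) : HorZero W (vbr x v) := by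
  intro p hp
  have h1 : fderiv ℝ x p (v p) = 0 := zindep_fderiv x hx p _ (h p hp).1 (h p hp).2
  constructor
  · simp only [vbr, h1, sub_zero]
    rw [fderiv_comp_apply v hv, fderiv_zero_of_open _ W hW (fun p hp => (h p hp).1) p hp]; rfl
  · simp only [vbr, h1, sub_zero]
    rw [fderiv_comp_apply v hv, fderiv_zero_of_open _ W hW (fun p hp => (h p hp).2) p hp]; rfl

lemma vbr_two (x v : VF 3) (hx : ZIndep x) (hv : Differentiable ℝ v) (p : E3)
    (h : v p 0 = 0 ∧ v p 1 = 0) : vbr x v p 2 = fderiv ℝ (fun p => v p 2) p (x p) := by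
  have h1 : fderiv ℝ x p (v p) = 0 := zindep_fderiv x hx p _ h.1 h.2
  simp only [vbr, h1, sub_zero]
  rw [fderiv_comp_apply v hv]

lemma descent (g : Submodule ℝ (VF 3)) (hbr : ∀ v ∈ g, ∀ w ∈ g, vbr v w ∈ g)
    (hnil : IsNilpotentVF g) (S T : VF 3 → Prop) (hT : T 0)
    (hS : ∀ v ∈ g, S v → ∀ x ∈ g, S (vbr x v)) (v : VF 3) (hv : v ∈ g) (hSv : S v)
    (hTv : ¬ T v) : ∃ w ∈ g, S w ∧ ¬ T w ∧ ∀ x ∈ g, T (vbr x w) := by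
  by_contra hcon
  push Not at hcon
  have key : ∀ j, ∃ w ∈ lcs g j, w ∈ g ∧ S w ∧ ¬ T w := by
    intro j
    induction j with
    | zero => exact ⟨v, hv, hv, hSv, hTv⟩
    | succ j ih =>
      obtain ⟨w, hwj, hw, hSw, hTw⟩ := ih
      obtain ⟨x, hx, hTx⟩ := hcon w hw hSw hTw
      exact ⟨vbr x w, Submodule.subset_span ⟨x, hx, w, hwj, rfl⟩, hbr x hx w hw, hS w hw hSw x hx, hTx⟩
  obtain ⟨j, hj⟩ := hnil
  obtain ⟨w, hwj, -, -, hTw⟩ := key j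
  rw [hj, Submodule.mem_bot] at hwj
  exact hTw (hwj ▸ hT)

lemma adPow_mem_lcs (g : Submodule ℝ (VF 3)) (X : VF 3) (hX : X ∈ g) (v : VF 3) (hv : v ∈ g) (j : ℕ) :
    adPow X j v ∈ lcs g j := by
  induction j with
  | zero => exact hv
  | succ j ih => exact Submodule.subset_span ⟨X, hX, _, ih, rfl⟩

lemma adPow_mem (g : Submodule ℝ (VF 3)) (hbr : ∀ v ∈ g, ∀ w ∈ g, vbr v w ∈ g)
    (X : VF 3) (hX : X ∈ g) (v : VF 3) (hv : v ∈ g) (j : ℕ) :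
    adPow X j v ∈ g := by
  induction j with
  | zero => exact hv
  | succ j ih => exact hbr _ hX _ ih

lemma adPow_comb (g : Submodule ℝ (VF 3)) (hbr : ∀ v ∈ g, ∀ w ∈ g, vbr v w ∈ g)
    (hs : ∀ v ∈ g, Differentiable ℝ v)
    (X : VF 3) (hX : X ∈ g) (v w : VF 3) (hv : v ∈ g) (hw : w ∈ g) (c : ℝ) (j : ℕ) :
    adPow X j (v + c • w) = adPow X j v + c • adPow X j w := by
  induction j with
  | zero => rfl
  | succ j ih =>
    simp only [adPow]
    have h1 := adPow_mem g hbr X hX v hv j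
    have h2 := adPow_mem g hbr X hX w hw j
    rw [ih, vbr_add_right _ _ _ (hs _ h1) (hs _ (g.smul_mem c h2)), vbr_smul_right _ _ _ (hs _ h2)]

lemma adPow_zero_right (X : VF 3) (j : ℕ) : adPow X j 0 = 0 := by
  induction j with
  | zero => rfl
  | succ j ih => simp only [adPow, ih, vbr_zero_right]

lemma adPow_adPow (X v : VF 3) (j k : ℕ) : adPow X j (adPow X k v) = adPow X (j + k) v := by
  induction j with
  | zero => simp [adPow]
  | succ j ih => rw [Nat.succ_add]; simp only [adPow, ih]

lemma algebra_part (U : Set (Fin 3 → ℝ)) (hU : IsOpen U)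
    (g : Submodule ℝ (VF 3))
    (hsmooth : ∀ v ∈ g, ContDiff ℝ (⊤ : ℕ∞) v)
    (hbr : ∀ v ∈ g, ∀ w ∈ g, vbr v w ∈ g)
    (hnil : IsNilpotentVF g)
    (hcen : centerSet g = ↑(Submodule.span ℝ ({dd 2} : Set (VF 3))))
    (hz : ∀ v ∈ g, ZIndep v)
    (hrank1 : HasRankOn ((g.map Pzl : Submodule ℝ (VF 3)) : Set (VF 3)) U 1)
    (hker : ∃ v ∈ g, Pzl v = 0 ∧
      ∃ p q : Fin 3 → ℝ, p 1 = q 1 ∧ p 2 = q 2 ∧ v p 2 ≠ v q 2) :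
    (∀ v ∈ g, ∀ W : Set E3, IsOpen W → W.Nonempty → (∀ p ∈ W, v p = 0) → v = 0) ∧
    ∃ (f : E3 → ℝ) (X : VF 3) (N : ℕ) (u : VF 3), ContDiff ℝ ∞ f ∧ ZIndep f ∧ X ∈ g ∧ u ∈ g ∧
      (∀ p, fderiv ℝ f p (X p) = 1) ∧ (∀ j, HorZero U (adPow X j u)) ∧
      adPow X N u = (N.factorial : ℝ) • dd 2 ∧
      ∀ v ∈ g, ∃ c : ℝ, v - c • X ∈ Submodule.span ℝ
        (Set.range fun j : Fin (N + 1) => adPow X (j : ℕ) u) := by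
  have hs : ∀ v ∈ g, Differentiable ℝ v := fun v hv => (hsmooth v hv).differentiable (by simp)
  have hcen' : ∀ v, v ∈ centerSet g ↔ ∃ c : ℝ, c • dd 2 = v := by
    intro v
    rw [hcen, SetLike.mem_coe, Submodule.mem_span_singleton]
  have hd2 : (dd 2 : VF 3) ∈ g := ((hcen' (dd 2)).2 ⟨1, by simp⟩).1
  -- injectivity of restriction
  have hinj : ∀ v ∈ g, ∀ W : Set E3, IsOpen W → W.Nonempty → (∀ p ∈ W, v p = 0) → v = 0 := by
    intro v hv W hW ⟨p, hp⟩ hvW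
    by_contra hne
    obtain ⟨w, hw, hwW, hw0, hwc⟩ := descent g hbr hnil (fun v => ∀ p ∈ W, v p = 0) (fun v => v = 0)
      rfl (fun v _ hvW x _ => vbr_open_zero x v W hW hvW) v hv hvW hne
    obtain ⟨c, hc⟩ := (hcen' w).1 ⟨hw, fun x hx => by rw [vbr_anti, hwc x hx, neg_zero]⟩
    have h1 := congrFun (hwW p hp) 2
    rw [← hc] at h1
    simp [dd] at h1
    exact hw0 (by rw [← hc, h1, zero_smul])
  refine ⟨hinj, ?_⟩
  obtain ⟨v0, hv0, hPv0, p1, q1, -, -, hpq⟩ := hker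
  have hPz : ∀ v : VF 3, Pzl v = 0 ↔ HorZero univ v := by
    intro v
    constructor
    · intro h p _
      have := congrFun h p
      exact ⟨by simpa [Pzl] using congrFun this 0, by simpa [Pzl] using congrFun this 1⟩
    · intro h
      funext p i
      fin_cases i
      · simpa [Pzl] using (h p trivial).1
      · simpa [Pzl] using (h p trivial).2
      · simp [Pzl]
  obtain ⟨w, hw, hwA, hwc, hwx⟩ := descent g hbr hnil (HorZero univ) (fun v => v ∈ centerSet g)
    ((hcen' 0).2 ⟨0, by simp⟩)
    (fun v hv hvA x hx => vbr_horzero x v (hz x hx) (hs v hv) univ isOpen_univ hvA) v0 hv0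
    ((hPz v0).1 hPv0) (by
      intro h
      obtain ⟨c, hc⟩ := (hcen' v0).1 h
      apply hpq
      rw [← hc]; rfl)
  let f : E3 → ℝ := fun p => w p 2
  have hf : ContDiff ℝ ∞ f := contDiff_pi.1 (hsmooth w hw) 2
  have hfz : ZIndep f := fun p p' h0 h1 => congrFun (hz w hw p p' h0 h1) 2
  have hfx : ∀ x ∈ g, ∃ c : ℝ, ∀ p, fderiv ℝ f p (x p) = c := by
    intro x hx
    obtain ⟨c, hc⟩ := (hcen' _).1 (hwx x hx)
    refine ⟨c, fun p => ?_⟩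
    rw [← vbr_two x w (hz x hx) (hs w hw) p (hwA p trivial), ← hc]
    simp [dd]
  choose! cc hcc using hfx
  obtain ⟨x0, hx0, hx0w⟩ : ∃ x ∈ g, cc x ≠ 0 := by
    by_contra hcon
    push Not at hcon
    apply hwc
    refine ⟨hw, fun x hx => ?_⟩
    rw [vbr_anti, neg_eq_zero]
    obtain ⟨c, hc⟩ := (hcen' _).1 (hwx x hx)
    have h1 := vbr_two x w (hz x hx) (hs w hw) 0 (hwA 0 trivial)
    have h2 := hcc x hx 0
    rw [hcon x hx] at h2
    rw [← hc] at h1 ⊢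
    have : c = 0 := by
      simp only [dd, Pi.smul_apply, Pi.single_eq_same, smul_eq_mul, mul_one] at h1
      rw [h1]; exact h2
    rw [this, zero_smul]
  let X : VF 3 := (cc x0)⁻¹ • x0
  have hX : X ∈ g := g.smul_mem _ hx0
  have hfX : ∀ p, fderiv ℝ f p (X p) = 1 := by
    intro p
    simp only [X, Pi.smul_apply, map_smul, hcc x0 hx0, smul_eq_mul]
    exact inv_mul_cancel₀ hx0w
  obtain ⟨hr1, p0, hp0, -⟩ := hrank1
  have hUne : U.Nonempty := ⟨p0, hp0⟩
  have hfP : ∀ (v : VF 3) p, fderiv ℝ f p (Pzl v p) = fderiv ℝ f p (v p) := by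
    intro v p
    have h1 := zindep_fderiv f hfz p (v p - Pzl v p) (by simp [Pzl]) (by simp [Pzl])
    rw [map_sub, sub_eq_zero] at h1
    exact h1.symm
  have hdec : ∀ y ∈ g, HorZero U (y - cc y • X) := by
    intro y hy p hp
    have h1 := hr1 p hp
    unfold evalDim at h1
    obtain ⟨b, hb⟩ := finrank_le_one_iff.1 h1
    obtain ⟨α, hα⟩ := hb ⟨Pzl X p, Submodule.subset_span ⟨Pzl X, ⟨X, hX, rfl⟩, rfl⟩⟩
    obtain ⟨β, hβ⟩ := hb ⟨Pzl y p, Submodule.subset_span ⟨Pzl y, ⟨y, hy, rfl⟩, rfl⟩⟩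
    have hα' : α • (b : E3) = Pzl X p := congrArg Subtype.val hα
    have hβ' : β • (b : E3) = Pzl y p := congrArg Subtype.val hβ
    have e1 := hfP X p
    have e2 := hfP y p
    rw [hfX, ← hα', map_smul, smul_eq_mul] at e1
    rw [hcc y hy, ← hβ', map_smul, smul_eq_mul] at e2
    have e3 : β = cc y * α := by
      rw [← e2]; linear_combination (-β) * e1
    have hk : Pzl y p = cc y • Pzl X p := by rw [← hβ', ← hα', e3, mul_smul]
    constructor
    · have := congrFun hk 0
      simp [Pzl] at this
      simp [this]
    · have := congrFun hk 1
      simp [Pzl] at this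
      simp [this]
  -- two elements of B commute
  have hBB : ∀ v ∈ g, ∀ b ∈ g, HorZero U v → HorZero U b → vbr v b = 0 := by
    intro v hv b hb hvU hbU
    apply hinj _ (hbr v hv b hb) U hU hUne
    intro p hp
    simp only [vbr]
    rw [zindep_fderiv b (hz b hb) p _ (hvU p hp).1 (hvU p hp).2,
      zindep_fderiv v (hz v hv) p _ (hbU p hp).1 (hbU p hp).2, sub_zero]
  have hkerX : ∀ v ∈ g, HorZero U v → vbr X v = 0 → ∃ c : ℝ, c • dd 2 = v := by
    intro v hv hvU hXv
    apply (hcen' v).1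
    refine ⟨hv, fun y hy => ?_⟩
    have hy' : y = (y - cc y • X) + cc y • X := by abel
    have hm : y - cc y • X ∈ g := g.sub_mem hy (g.smul_mem _ hX)
    rw [hy', vbr_add_right _ _ _ (hs _ hm) (hs _ (g.smul_mem _ hX)),
      vbr_smul_right _ _ _ (hs _ hX), hBB v hv _ hm hvU (hdec y hy), vbr_anti v X, hXv]
    simp
  have hBad : ∀ j, ∀ v ∈ g, HorZero U v → HorZero U (adPow X j v) := by
    intro j v hv hvU
    induction j with
    | zero => exact hvU
    | succ j ih => exact vbr_horzero X _ (hz X hX) (hs _ (adPow_mem g hbr X hX v hv j)) U hU ih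
  have hex : ∃ k, ∀ v ∈ g, HorZero U v → adPow X k v = 0 := by
    obtain ⟨J, hJ⟩ := hnil
    refine ⟨J, fun v hv _ => ?_⟩
    have := adPow_mem_lcs g X hX v hv J
    rwa [hJ, Submodule.mem_bot] at this
  have hd2U : HorZero U (dd 2) := fun p _ => by simp [dd]
  have hd2ne : (dd 2 : VF 3) ≠ 0 := by
    intro h
    have := congrFun (congrFun h 0) 2
    simp [dd] at this
  obtain ⟨N, hN⟩ : ∃ N, Nat.find hex = N + 1 := by
    apply Nat.exists_eq_succ_of_ne_zero
    intro h0
    have := Nat.find_spec hex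
    rw [h0] at this
    exact hd2ne (this _ hd2 hd2U)
  have hkill := Nat.find_spec hex
  rw [hN] at hkill
  have hmin := Nat.find_min hex (m := N) (by omega)
  push Not at hmin
  obtain ⟨u0, hu0, hu0U, hu0N⟩ := hmin
  obtain ⟨c, hc⟩ := hkerX (adPow X N u0) (adPow_mem g hbr X hX u0 hu0 N) (hBad N u0 hu0 hu0U)
    (hkill u0 hu0 hu0U)
  have hc0 : c ≠ 0 := by
    rintro rfl
    rw [zero_smul] at hc
    exact hu0N hc.symm
  let u : VF 3 := ((N.factorial : ℝ) / c) • u0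
  have hu : u ∈ g := g.smul_mem _ hu0
  have huU : HorZero U u := fun p hp => by simp [u, hu0U p hp]
  have huN : adPow X N u = (N.factorial : ℝ) • dd 2 := by
    have := adPow_comb g hbr hs X hX 0 u0 g.zero_mem hu0 ((N.factorial : ℝ) / c) N
    rw [zero_add, adPow_zero_right, zero_add, ← hc, smul_smul, div_mul_cancel₀ _ hc0] at this
    exact this
  refine ⟨f, X, N, u, hf, hfz, hX, hu, hfX, fun j => hBad j u hu huU, huN, ?_⟩
  have hfac : (N.factorial : ℝ) ≠ 0 := by positivity
  have hspan : ∀ k, k ≤ N + 1 → ∀ v ∈ g, HorZero U v → adPow X k v = 0 → v ∈ Submodule.span ℝ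
        (Set.range fun j : Fin (N + 1) => adPow X (j : ℕ) u) := by
    intro k
    induction k with
    | zero =>
      intro _ v _ _ h
      rw [show v = 0 from h]; exact Submodule.zero_mem _
    | succ k ih =>
      intro hk v hv hvU h
      obtain ⟨a, ha⟩ := hkerX (adPow X k v) (adPow_mem g hbr X hX v hv k) (hBad k v hv hvU) h
      have hm := adPow_mem g hbr X hX u hu (N - k)
      have hz0 : adPow X k (v + (-(a / N.factorial)) • adPow X (N - k) u) = 0 := by
        rw [adPow_comb g hbr hs X hX _ _ hv hm, adPow_adPow, Nat.add_sub_cancel' (by omega), huN,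
          ← ha, smul_smul, ← add_smul]
        field_simp
        simp
      have h1 := ih (by omega) _ (g.add_mem hv (g.smul_mem _ hm)) (by
        intro p hp
        simp [hvU p hp, hBad (N - k) u hu huU p hp]) hz0
      have h2 : adPow X (N - k) u ∈ Submodule.span ℝ
          (Set.range fun j : Fin (N + 1) => adPow X (j : ℕ) u) :=
        Submodule.subset_span ⟨⟨N - k, by omega⟩, rfl⟩
      have h3 := Submodule.sub_mem _ h1 (Submodule.smul_mem _ (-(a / N.factorial)) h2)
      rwa [add_sub_cancel_right] at h3
  intro y hy
  have hm : y - cc y • X ∈ g := g.sub_mem hy (g.smul_mem _ hX)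
  exact ⟨cc y, hspan (N + 1) le_rfl _ hm (hdec y hy) (hkill _ hm (hdec y hy))⟩

open Polynomial in
/-- vertical field with polynomial coefficient -/
noncomputable def ufield (P : ℝ → ℝ[X]) : VF 3 := fun p => ![0, 0, (P (p 1)).eval (p 0)]

open Polynomial in
/-- smooth family of polynomials -/
def GoodPol (P : ℝ → ℝ[X]) : Prop :=
  (∀ i, ContDiff ℝ ∞ fun s => (P s).coeff i) ∧ ∃ M, ∀ s, (P s).natDegree < M

open Polynomial in
lemma GoodPol.deriv {P : ℝ → ℝ[X]} (h : GoodPol P) : GoodPol (fun s => derivative (P s)) := by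
  refine ⟨fun i => ?_, ?_⟩
  · simp only [coeff_derivative]
    exact (h.1 _).mul contDiff_const
  · obtain ⟨M, hM⟩ := h.2
    refine ⟨M, fun s => lt_of_le_of_lt ((natDegree_derivative_le _).trans (Nat.sub_le _ _)) (hM s)⟩

lemma GoodPol.smooth {P : ℝ → Polynomial ℝ} (h : GoodPol P) :
    ContDiff ℝ ∞ fun p : E3 => (P (p 1)).eval (p 0) := by
  obtain ⟨M, hM⟩ := h.2
  have : (fun p : E3 => (P (p 1)).eval (p 0)) =
      fun p : E3 => ∑ i ∈ Finset.range M, (P (p 1)).coeff i * (p 0) ^ i := by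
    funext p
    exact Polynomial.eval_eq_sum_range' (hM _) _
  rw [this]
  refine ContDiff.sum fun i _ => ContDiff.mul ?_ ?_
  · exact (h.1 i).comp (contDiff_apply ℝ ℝ (1 : Fin 3))
  · exact (contDiff_apply ℝ ℝ (0 : Fin 3)).pow i

lemma GoodPol.smooth' {P : ℝ → Polynomial ℝ} (h : GoodPol P) : ContDiff ℝ ∞ (ufield P) := by
  rw [contDiff_pi]
  intro i
  fin_cases i
  · exact contDiff_const
  · exact contDiff_const
  · exact h.smooth

lemma ufield_hor (P : ℝ → Polynomial ℝ) (W : Set E3) : HorZero W (ufield P) := by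
  intro p _
  simp [ufield]

lemma vbr_ufield {P : ℝ → Polynomial ℝ} (h : GoodPol P) :
    vbr (dd 0) (ufield P) = ufield (fun s => Polynomial.derivative (P s)) := by
  have hz : ZIndep (dd 0 : VF 3) := fun _ _ _ _ => rfl
  have hd : Differentiable ℝ (ufield P) := h.smooth'.differentiable (by simp)
  have hh := vbr_horzero _ _ hz hd univ isOpen_univ (ufield_hor P univ)
  funext p i
  fin_cases i
  · simpa [ufield] using (hh p (mem_univ _)).1
  · simpa [ufield] using (hh p (mem_univ _)).2
  · have h2 := vbr_two (dd 0) _ hz hd p (ufield_hor P univ p (mem_univ _))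
    show vbr (dd 0) (ufield P) p 2 = _
    rw [h2]
    show fderiv ℝ (fun p : E3 => (P (p 1)).eval (p 0)) p (Pi.single 0 1) =
      (Polynomial.derivative (P (p 1))).eval (p 0)
    have hf : HasFDerivAt (fun p : E3 => (P (p 1)).eval (p 0))
        (fderiv ℝ (fun p : E3 => (P (p 1)).eval (p 0)) p) (p + (0 : ℝ) • Pi.single 0 1) := by
      have := ((h.smooth.differentiable (by simp)) p).hasFDerivAt
      simpa using this
    have hl : HasDerivAt (fun t : ℝ => p + t • (Pi.single 0 1 : E3)) (Pi.single 0 1) 0 := by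
      simpa using ((hasDerivAt_id (0 : ℝ)).smul_const (Pi.single 0 1 : E3)).const_add p
    have h4 := hf.comp_hasDerivAt (0 : ℝ) hl
    have h5 : ((fun p : E3 => (P (p 1)).eval (p 0)) ∘ fun t : ℝ => p + t • (Pi.single 0 1 : E3)) =
        fun t => (P (p 1)).eval (p 0 + t) := by
      funext t
      simp
    rw [h5] at h4
    have h6 := ((P (p 1)).hasDerivAt (p 0 + 0)).comp_const_add (p 0) 0
    have := h4.unique h6
    simpa using this

lemma adPow_ufield {P : ℝ → Polynomial ℝ} (h : GoodPol P) (j : ℕ) :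
    adPow (dd 0) j (ufield P) = ufield (fun s => Polynomial.derivative^[j] (P s)) ∧
    GoodPol (fun s => Polynomial.derivative^[j] (P s)) := by
  induction j with
  | zero => exact ⟨rfl, h⟩
  | succ j ih =>
    simp only [Function.iterate_succ_apply']
    refine ⟨?_, ih.2.deriv⟩
    show vbr (dd 0) (adPow (dd 0) j (ufield P)) = _
    rw [ih.1, vbr_ufield ih.2]

open Polynomial in
lemma chain_indep (Q : ℝ[X]) (N : ℕ) (hd : Q.natDegree = N) (hm : Q.Monic) (a : ℕ → ℝ)
    (h : ∑ j ∈ Finset.range (N + 1), a j • derivative^[j] Q = 0) : ∀ j ≤ N, a j = 0 := by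
  intro j
  induction j using Nat.strong_induction_on with
  | _ j ih =>
    intro hj
    have h1 := congrArg (fun P => coeff P (N - j)) h
    simp only [finsetSum_coeff, coeff_smul, coeff_zero, coeff_iterate_derivative] at h1
    rw [Finset.sum_eq_single j] at h1
    · rw [Nat.sub_add_cancel hj, ← hd, hm.coeff_natDegree, hd] at h1
      simp only [nsmul_eq_mul, smul_eq_mul, mul_one] at h1
      have : (N.descFactorial j : ℝ) ≠ 0 := by
        exact_mod_cast (Nat.descFactorial_pos.2 hj).ne'
      simpa [this] using h1
    · intro i hi hij
      rcases lt_or_gt_of_ne hij with hlt | hgt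
      · rw [ih i hlt (by omega), zero_smul]
      · rw [coeff_eq_zero_of_natDegree_lt (n := N - j + i) (by omega)]
        simp
    · intro hh
      exact absurd (Finset.mem_range.2 (by omega)) hh

open Polynomial in
/-- the model polynomial -/
noncomputable def polc {N : ℕ} (c : Fin N → ℝ → ℝ) (s : ℝ) : ℝ[X] :=
  X ^ N + ∑ i : Fin N, C (c i s) * X ^ (i : ℕ)

open Polynomial in
lemma polc_deg_lt {N : ℕ} (c : Fin N → ℝ → ℝ) (s : ℝ) :
    (∑ i : Fin N, C (c i s) * X ^ (i : ℕ)).degree < (N : WithBot ℕ) := by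
  refine (degree_sum_le _ _).trans_lt ?_
  refine (Finset.sup_lt_iff (WithBot.bot_lt_coe N)).2 ?_
  intro i _
  refine (degree_C_mul_X_pow_le _ _).trans_lt ?_
  exact WithBot.coe_lt_coe.2 i.2

open Polynomial in
lemma polc_monic {N : ℕ} (c : Fin N → ℝ → ℝ) (s : ℝ) : (polc c s).Monic :=
  monic_X_pow_add (polc_deg_lt c s)

open Polynomial in
lemma polc_deg {N : ℕ} (c : Fin N → ℝ → ℝ) (s : ℝ) : (polc c s).natDegree = N := by
  have : (polc c s).degree = N := by
    unfold polc
    rw [degree_add_eq_left_of_degree_lt, degree_X_pow]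
    rw [degree_X_pow]; exact polc_deg_lt c s
  exact natDegree_eq_of_degree_eq_some this

open Polynomial in
lemma polc_good {N : ℕ} (c : Fin N → ℝ → ℝ) (hc : ∀ i, ContDiff ℝ ∞ (c i)) : GoodPol (polc c) := by
  refine ⟨fun i => ?_, N + 1, fun s => by rw [polc_deg]; omega⟩
  simp only [polc, coeff_add, finsetSum_coeff, coeff_C_mul]
  refine contDiff_const.add (ContDiff.sum fun j _ => (hc j).mul contDiff_const)

lemma polc_eval {N : ℕ} (c : Fin N → ℝ → ℝ) (s t : ℝ) :
    (polc c s).eval t = t ^ N + ∑ i : Fin N, c i s * t ^ (i : ℕ) := by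
  simp [polc, Polynomial.eval_finsetSum]

lemma model_zero {N : ℕ} (c : Fin N → ℝ → ℝ) (hc : ∀ i, ContDiff ℝ ∞ (c i)) (V : Set E3)
    (hV : IsOpen V) (hne : V.Nonempty) (b : ℝ) (a : ℕ → ℝ)
    (h : ∀ q ∈ V, (b • dd 0 + ∑ j ∈ Finset.range (N + 1), a j • adPow (dd 0) j (ufield (polc c)) : VF 3) q = 0) :
    b = 0 ∧ ∀ j ≤ N, a j = 0 := by
  have hg := polc_good c hc
  have key : ∀ q, (b • dd 0 + ∑ j ∈ Finset.range (N + 1), a j • adPow (dd 0) j (ufield (polc c)) : VF 3) q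
      = ![b, 0, (∑ j ∈ Finset.range (N + 1), a j • Polynomial.derivative^[j] (polc c (q 1))).eval (q 0)] := by
    intro q
    simp only [Pi.add_apply, Finset.sum_apply, Pi.smul_apply, fun j => (adPow_ufield hg j).1]
    funext i
    simp only [Pi.add_apply, Finset.sum_apply, Pi.smul_apply]
    fin_cases i
    · simp [dd, ufield]
    · simp [dd, ufield]
    · simp [dd, ufield, Polynomial.eval_finsetSum]
  obtain ⟨q, hq⟩ := hne
  refine ⟨?_, ?_⟩
  · have := congrFun (h q hq) 0
    rw [key] at this
    simpa using this
  · refine chain_indep (polc c (q 1)) N (polc_deg c _) (polc_monic c _) a ?_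
    apply Polynomial.eq_zero_of_infinite_isRoot
    have hcont : Continuous fun t : ℝ => Function.update q 0 t := by fun_prop
    have hnh : (fun t : ℝ => Function.update q 0 t) ⁻¹' V ∈ 𝓝 (q 0) := by
      apply hcont.continuousAt.preimage_mem_nhds
      rw [Function.update_eq_self]; exact hV.mem_nhds hq
    refine (infinite_of_mem_nhds _ hnh).mono ?_
    intro t ht
    have := congrFun (h _ ht) 2
    rw [key] at this
    simpa [Polynomial.IsRoot] using this

/-- the vertical part of the model algebra -/
noncomputable def modelK {N : ℕ} (c : Fin N → ℝ → ℝ) : Submodule ℝ (VF 3) :=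
  Submodule.span ℝ (Set.range fun j : Fin (N + 1) => adPow (dd 0) (j : ℕ) (ufield (polc c)))

lemma mem_modelK {N : ℕ} (c : Fin N → ℝ → ℝ) (v : VF 3) (hv : v ∈ modelK c) :
    ∃ a : ℕ → ℝ, v = ∑ j ∈ Finset.range (N + 1), a j • adPow (dd 0) j (ufield (polc c)) := by
  unfold modelK at hv
  rw [Submodule.mem_span_range_iff_exists_fun] at hv
  obtain ⟨a, rfl⟩ := hv
  refine ⟨fun j => if h : j < N + 1 then a ⟨j, h⟩ else 0, ?_⟩
  rw [Finset.sum_range]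
  simp only [Fin.is_lt, dif_pos, Fin.eta]

lemma adPow_mem_modelK {N : ℕ} (c : Fin N → ℝ → ℝ) (j : ℕ) (hj : j ≤ N) :
    adPow (dd 0) j (ufield (polc c)) ∈ modelK c :=
  Submodule.subset_span ⟨⟨j, by omega⟩, rfl⟩

lemma adPow_top {N : ℕ} (c : Fin N → ℝ → ℝ) (hc : ∀ i, ContDiff ℝ ∞ (c i)) :
    adPow (dd 0) (N + 1) (ufield (polc c)) = 0 := by
  rw [(adPow_ufield (polc_good c hc) (N + 1)).1]
  have : ∀ s, Polynomial.derivative^[N + 1] (polc c s) = 0 := fun s =>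
    Polynomial.iterate_derivative_eq_zero (by rw [polc_deg]; omega)
  funext p i
  fin_cases i <;> simp [ufield, this]

lemma modelK_props {N : ℕ} (c : Fin N → ℝ → ℝ) (hc : ∀ i, ContDiff ℝ ∞ (c i)) (v : VF 3)
    (hv : v ∈ modelK c) : Differentiable ℝ v ∧ HorZero univ v ∧ ZIndep v ∧ vbr (dd 0) v ∈ modelK c := by
  unfold modelK at hv
  induction hv using Submodule.span_induction with
  | mem x hx =>
    obtain ⟨j, rfl⟩ := hx
    have hj := adPow_ufield (polc_good c hc) j
    refine ⟨?_, ?_, ?_, ?_⟩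
    · simp only [hj.1]; exact hj.2.smooth'.differentiable (by simp)
    · simp only [hj.1]; exact ufield_hor _ _
    · simp only [hj.1]
      intro p p' h0 h1
      simp [ufield, h0, h1]
    · show adPow (dd 0) (j + 1) (ufield (polc c)) ∈ _
      rcases Nat.lt_or_ge j N with h | h
      · exact adPow_mem_modelK c _ h
      · have : (j : ℕ) = N := by omega
        rw [this, adPow_top c hc]; exact Submodule.zero_mem _
  | zero =>
    refine ⟨differentiable_const _, fun p _ => by simp, fun _ _ _ _ => rfl, ?_⟩
    rw [vbr_zero_right]; exact Submodule.zero_mem _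
  | add x y _ _ hx hy =>
    refine ⟨hx.1.add hy.1, fun p hp => ?_, fun p p' h0 h1 => ?_, ?_⟩
    · simp [(hx.2.1 p hp).1, (hx.2.1 p hp).2, (hy.2.1 p hp).1, (hy.2.1 p hp).2]
    · simp [hx.2.2.1 p p' h0 h1, hy.2.2.1 p p' h0 h1]
    · rw [vbr_add_right _ _ _ hx.1 hy.1]; exact Submodule.add_mem _ hx.2.2.2 hy.2.2.2
  | smul r x _ hx =>
    refine ⟨hx.1.const_smul r, fun p hp => ?_, fun p p' h0 h1 => ?_, ?_⟩
    · simp [(hx.2.1 p hp).1, (hx.2.1 p hp).2]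
    · simp [hx.2.2.1 p p' h0 h1]
    · rw [vbr_smul_right _ _ _ hx.1]; exact Submodule.smul_mem _ _ hx.2.2.2

lemma modelK_abelian {N : ℕ} (c : Fin N → ℝ → ℝ) (hc : ∀ i, ContDiff ℝ ∞ (c i)) (v w : VF 3)
    (hv : v ∈ modelK c) (hw : w ∈ modelK c) : vbr v w = 0 := by
  have h1 := modelK_props c hc v hv
  have h2 := modelK_props c hc w hw
  funext p
  have a := h1.2.1 p (mem_univ _)
  have b := h2.2.1 p (mem_univ _)
  simp [vbr, zindep_fderiv v h1.2.2.1 p _ b.1 b.2, zindep_fderiv w h2.2.2.1 p _ a.1 a.2]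

lemma mem_modelG {N : ℕ} (c : Fin N → ℝ → ℝ) (v : VF 3) :
    v ∈ Submodule.span ℝ ({dd 0} ∪ (modelK c : Set (VF 3))) ↔
      ∃ b : ℝ, ∃ w ∈ modelK c, v = b • dd 0 + w := by
  rw [Submodule.span_union, Submodule.span_eq, Submodule.mem_sup]
  constructor
  · rintro ⟨y, hy, z, hz, rfl⟩
    obtain ⟨b, rfl⟩ := Submodule.mem_span_singleton.1 hy
    exact ⟨b, z, hz, rfl⟩
  · rintro ⟨b, w, hw, rfl⟩
    exact ⟨_, Submodule.mem_span_singleton.2 ⟨b, rfl⟩, w, hw, rfl⟩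

lemma model_part {N : ℕ} (c : Fin N → ℝ → ℝ) (hc : ∀ i, ContDiff ℝ ∞ (c i)) :
    LinearIndependent ℝ (fun j : Fin (N + 1) => adPow (dd 0) (j : ℕ) (ufield (polc c))) ∧
    adPow (dd 0) (N + 1) (ufield (polc c)) = 0 ∧
    IsAbelianSet (modelK c : Set (VF 3)) ∧
    dd 0 ∉ modelK c ∧
    modelK c = Submodule.span ℝ ({dd 0} ∪ (modelK c : Set (VF 3))) ⊓ LinearMap.ker Pzl ∧
    (∀ v ∈ Submodule.span ℝ ({dd 0} ∪ (modelK c : Set (VF 3))), ∀ a ∈ modelK c, vbr v a ∈ modelK c) := by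
  refine ⟨?_, adPow_top c hc, fun v hv w hw => modelK_abelian c hc v w hv hw, ?_, ?_, ?_⟩
  · rw [Fintype.linearIndependent_iff]
    intro a ha i
    have := (model_zero c hc univ isOpen_univ ⟨0, mem_univ _⟩ 0
      (fun j => if h : j < N + 1 then a ⟨j, h⟩ else 0) (fun q _ => by
        rw [Finset.sum_range]
        simp only [Fin.is_lt, dif_pos, Fin.eta, zero_smul, zero_add]
        exact congrFun ha q)).2 i (by omega)
    simpa only [Fin.is_lt, dif_pos, Fin.eta] using this
  · intro h
    have := ((modelK_props c hc _ h).2.1 0 (mem_univ _)).1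
    simp [dd] at this
  · ext v
    rw [Submodule.mem_inf, LinearMap.mem_ker]
    constructor
    · intro hv
      refine ⟨Submodule.subset_span (Or.inr hv), ?_⟩
      have := (modelK_props c hc _ hv).2.1
      funext p i
      fin_cases i
      · simpa [Pzl] using (this p (mem_univ _)).1
      · simpa [Pzl] using (this p (mem_univ _)).2
      · simp [Pzl]
    · rintro ⟨h1, h2⟩
      obtain ⟨b, w, hw, rfl⟩ := (mem_modelG c v).1 h1
      have h3 := congrFun (congrFun h2 0) 0
      have h4 := ((modelK_props c hc _ hw).2.1 0 (mem_univ _)).1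
      simp [Pzl, dd, h4] at h3
      rw [h3, zero_smul, zero_add]; exact hw
  · intro v hv a ha
    obtain ⟨b, w, hw, rfl⟩ := (mem_modelG c v).1 hv
    have h1 : vbr (b • dd 0 + w) a = b • vbr (dd 0) a := by
      have hd : Differentiable ℝ (dd 0 : VF 3) := differentiable_const _
      rw [vbr_anti, vbr_add_right _ _ _ (hd.const_smul b) (modelK_props c hc _ hw).1,
        vbr_smul_right _ _ _ hd, modelK_abelian c hc a w ha hw, vbr_anti a (dd 0)]
      simp
    rw [h1]
    exact Submodule.smul_mem _ _ (modelK_props c hc _ ha).2.2.2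

/-- projection to the plane -/
noncomputable def prXY : E3 →L[ℝ] ℝ × ℝ :=
  (ContinuousLinearMap.proj 0).prod (ContinuousLinearMap.proj 1)

lemma prXY_apply (p : E3) : prXY p = (p 0, p 1) := rfl

/-- section of the projection -/
noncomputable def secXY : ℝ × ℝ → E3 := fun a => ![a.1, a.2, 0]

lemma secXY_smooth : ContDiff ℝ ∞ secXY := by
  rw [contDiff_pi]
  intro i
  fin_cases i
  · exact contDiff_fst
  · exact contDiff_snd
  · exact contDiff_const

lemma straighten (U : Set E3) (hU : IsOpen U) (p0 : E3) (hp0 : p0 ∈ U) (f : E3 → ℝ) (X : VF 3)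
    (hf : ContDiff ℝ ∞ f) (hfz : ZIndep f) (hX : ContDiff ℝ ∞ X) (hXz : ZIndep X)
    (hfX : ∀ p, fderiv ℝ f p (X p) = 1) :
    ∃ e : OpenPartialHomeomorph E3 E3, p0 ∈ e.source ∧ e.source ⊆ U ∧
      (∀ p ∈ e.source, ContDiffAt ℝ ∞ e p) ∧ (∀ q ∈ e.target, ContDiffAt ℝ ∞ e.symm q) ∧
      (∀ p ∈ e.source, e p 0 = f p) ∧
      (∀ p ∈ e.source, fderiv ℝ e p (X p) = Pi.single 0 1) ∧
      (∀ p ∈ e.source, ∀ x : E3, x 0 = 0 → x 1 = 0 → fderiv ℝ e p x = x) := by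
  have hXs : ∀ p, X p = X (secXY (prXY p)) := fun p => hXz _ _ rfl rfl
  have hXi : ∀ i, ContDiff ℝ ∞ fun a => X (secXY a) i := fun i =>
    (contDiff_apply ℝ ℝ i).comp (hX.comp secXY_smooth)
  have hne : X (secXY (prXY p0)) 0 ≠ 0 ∨ X (secXY (prXY p0)) 1 ≠ 0 := by
    rw [← hXs]
    by_contra h
    push Not at h
    have := hfX p0
    rw [zindep_fderiv f hfz p0 _ h.1 h.2] at this
    exact zero_ne_one this
  obtain ⟨h, r, hev, hh0⟩ := first_integral' _ _ _ (hXi 0) (hXi 1) (hXi 2) (prXY p0) hne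
  obtain ⟨O, hO, hOo, hp0O⟩ := eventually_nhds_iff.1 hev
  set W : Set E3 := U ∩ prXY ⁻¹' O with hW
  have hWo : IsOpen W := hU.inter (hOo.preimage prXY.continuous)
  have hp0W : p0 ∈ W := ⟨hp0, hp0O⟩
  let φ : E3 → E3 := fun p => ![f p, h (prXY p), p 2 - r (prXY p)]
  have hc1 : ∀ p ∈ W, ContDiffAt ℝ ∞ (fun p => h (prXY p)) p := fun p hp =>
    ContDiffAt.comp p (hO _ hp.2).1 prXY.contDiff.contDiffAt
  have hc2 : ∀ p ∈ W, ContDiffAt ℝ ∞ (fun p : E3 => p 2 - r (prXY p)) p := fun p hp =>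
    (contDiff_apply ℝ ℝ (2 : Fin 3)).contDiffAt.sub
      (ContDiffAt.comp p (hO _ hp.2).2.1 prXY.contDiff.contDiffAt)
  have hφ : ∀ p ∈ W, ContDiffAt ℝ ∞ φ p := by
    intro p hp
    rw [contDiffAt_pi]
    intro i
    fin_cases i
    · exact hf.contDiffAt
    · exact hc1 p hp
    · exact hc2 p hp
  have hD : ∀ p ∈ W, ∀ x, fderiv ℝ φ p x =
      ![fderiv ℝ f p x, fderiv ℝ h (prXY p) (prXY x), x 2 - fderiv ℝ r (prXY p) (prXY x)] := by
    intro p hp x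
    have hd : DifferentiableAt ℝ φ p := (hφ p hp).differentiableAt (by simp)
    have hdh : DifferentiableAt ℝ h (prXY p) := (hO _ hp.2).1.differentiableAt (by simp)
    have hdr : DifferentiableAt ℝ r (prXY p) := (hO _ hp.2).2.1.differentiableAt (by simp)
    have hcomp : ∀ i, fderiv ℝ φ p x i = fderiv ℝ (fun p => φ p i) p x := by
      intro i
      rw [fderiv_apply hd]; rfl
    funext i
    rw [hcomp]
    fin_cases i
    · rfl
    · show fderiv ℝ (fun p => h (prXY p)) p x = fderiv ℝ h (prXY p) (prXY x)
      have := hdh.hasFDerivAt.comp p (prXY.hasFDerivAt (x := p))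
      have h2 := this.fderiv
      have h3 : (h ∘ prXY) = fun p => h (prXY p) := rfl
      rw [h3] at h2
      rw [h2]; rfl
    · show fderiv ℝ (fun p : E3 => p 2 - r (prXY p)) p x = x 2 - fderiv ℝ r (prXY p) (prXY x)
      have := (ContinuousLinearMap.hasFDerivAt
        (ContinuousLinearMap.proj (R := ℝ) (φ := fun _ : Fin 3 => ℝ) 2) (x := p)).sub
        (hdr.hasFDerivAt.comp p (prXY.hasFDerivAt (x := p)))
      have h2 := this.fderiv
      have h3 : (⇑(ContinuousLinearMap.proj (R := ℝ) (φ := fun _ : Fin 3 => ℝ) 2) - r ∘ prXY)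
        = fun p : E3 => p 2 - r (prXY p) := rfl
      rw [h3] at h2
      rw [h2]; rfl
  have hpX : ∀ p, prXY (X p) = (X (secXY (prXY p)) 0, X (secXY (prXY p)) 1) := by
    intro p
    rw [← hXs]; rfl
  have hDX : ∀ p ∈ W, fderiv ℝ φ p (X p) = Pi.single 0 1 := by
    intro p hp
    rw [hD p hp, hfX, hpX, (hO _ hp.2).2.2.1, (hO _ hp.2).2.2.2, ← hXs]
    funext i
    fin_cases i <;> simp
  have hDz : ∀ p ∈ W, ∀ x : E3, x 0 = 0 → x 1 = 0 → fderiv ℝ φ p x = x := by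
    intro p hp x h0 h1
    have : prXY x = 0 := by rw [prXY_apply, h0, h1]; rfl
    rw [hD p hp, this, zindep_fderiv f hfz p x h0 h1]
    funext i
    fin_cases i <;> simp [h0, h1]
  have hinj : ∀ v, fderiv ℝ φ p0 v = 0 → v = 0 := by
    intro v hv
    have hv' := hv
    rw [hD p0 hp0W] at hv
    have e0 : fderiv ℝ f p0 v = 0 := by simpa using congrFun hv 0
    have e1 : fderiv ℝ h (prXY p0) (prXY v) = 0 := by simpa using congrFun hv 1
    have eX : fderiv ℝ h (prXY p0) (prXY (X p0)) = 0 := by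
      rw [hpX]; exact (hO _ hp0O).2.2.1
    -- determinant
    have lin : ∀ a b : ℝ, fderiv ℝ h (prXY p0) (a, b) =
        a * fderiv ℝ h (prXY p0) (1, 0) + b * fderiv ℝ h (prXY p0) (0, 1) := by
      intro a b
      have : ((a, b) : ℝ × ℝ) = a • (1, 0) + b • (0, 1) := by simp
      rw [this, map_add, map_smul, map_smul]; rfl
    have hdet : v 0 * X p0 1 - v 1 * X p0 0 = 0 := by
      by_contra hne
      apply hh0
      rw [prXY_apply v, lin] at e1
      rw [prXY_apply (X p0), lin] at eX
      have k1 : (v 0 * X p0 1 - v 1 * X p0 0) * fderiv ℝ h (prXY p0) (1, 0) = 0 := by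
        linear_combination X p0 1 * e1 - v 1 * eX
      have k2 : (v 0 * X p0 1 - v 1 * X p0 0) * fderiv ℝ h (prXY p0) (0, 1) = 0 := by
        linear_combination v 0 * eX - X p0 0 * e1
      have k1' := (mul_eq_zero.1 k1).resolve_left hne
      have k2' := (mul_eq_zero.1 k2).resolve_left hne
      ext <;> simp [k1', k2']
    rw [← hXs] at hne
    obtain ⟨lam, hl0, hl1⟩ : ∃ lam : ℝ, v 0 = lam * X p0 0 ∧ v 1 = lam * X p0 1 := by
      rcases hne with hx | hx
      · refine ⟨v 0 / X p0 0, by field_simp, ?_⟩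
        field_simp; linarith
      · refine ⟨v 1 / X p0 1, ?_, by field_simp⟩
        field_simp; linarith
    have hsub : fderiv ℝ f p0 (v - lam • X p0) = 0 :=
      zindep_fderiv f hfz p0 _ (by simp [hl0]) (by simp [hl1])
    rw [map_sub, map_smul, hfX, e0] at hsub
    have hlam : lam = 0 := by simpa using hsub
    rw [hlam, zero_mul] at hl0 hl1
    rw [hDz p0 hp0W v hl0 hl1] at hv'
    exact hv'
  obtain ⟨e, he, hps, _, hsym⟩ := inv_fun φ p0
    (by filter_upwards [hWo.mem_nhds hp0W] with p hp using hφ p hp) hinj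
  have heq : (e : E3 → E3) = φ := funext he
  refine ⟨e.restrOpen W hWo, ?_, ?_, ?_, ?_, ?_, ?_, ?_⟩
  · rw [OpenPartialHomeomorph.restrOpen_source]; exact ⟨hps, hp0W⟩
  · rw [OpenPartialHomeomorph.restrOpen_source]; exact fun p hp => hp.2.1
  all_goals have hcoe : ((e.restrOpen W hWo : OpenPartialHomeomorph E3 E3) : E3 → E3) = φ := heq
  · rw [OpenPartialHomeomorph.restrOpen_source, hcoe]
    exact fun p hp => hφ p hp.2
  · intro q hq
    refine hsym q ?_
    exact hq.1
  · rw [OpenPartialHomeomorph.restrOpen_source, hcoe]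
    intro p _; rfl
  · rw [OpenPartialHomeomorph.restrOpen_source, hcoe]
    exact fun p hp => hDX p hp.2
  · rw [OpenPartialHomeomorph.restrOpen_source, hcoe]
    exact fun p hp => hDz p hp.2

lemma const_along (U : Set E3) (e : OpenPartialHomeomorph E3 E3) (X : VF 3)
    (hsU : e.source ⊆ U)
    (hs : ∀ p ∈ e.source, ContDiffAt ℝ ∞ e p) (ht : ∀ q ∈ e.target, ContDiffAt ℝ ∞ e.symm q)
    (hX : ∀ p ∈ e.source, fderiv ℝ e p (X p) = Pi.single 0 1)
    (hz : ∀ p ∈ e.source, ∀ x : E3, x 0 = 0 → x 1 = 0 → fderiv ℝ e p x = x)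
    (a : E3) (ε : ℝ) (hb : Metric.ball a ε ⊆ e.target)
    (F : E3 → ℝ) (hF : Differentiable ℝ F) (hFz : ZIndep F)
    (hFX : ∀ p ∈ U, fderiv ℝ F p (X p) = 0) (q q' : E3) (hq : q ∈ Metric.ball a ε)
    (hq' : q' ∈ Metric.ball a ε) (h1 : q 1 = q' 1) : F (e.symm q) = F (e.symm q') := by
  have hder : ∀ y ∈ Metric.ball a ε, HasFDerivAt (fun y => F (e.symm y))
      ((fderiv ℝ F (e.symm y)).comp (fderiv ℝ e.symm y)) y := by
    intro y hy
    exact ((hF _).hasFDerivAt).comp y ((ht y (hb hy)).differentiableAt (by simp)).hasFDerivAt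
  have hinv : ∀ y ∈ Metric.ball a ε, ∀ x, fderiv ℝ e.symm y (fderiv ℝ e (e.symm y) x) = x := by
    intro y hy x
    have hy' := hb hy
    have hps := e.map_target hy'
    have e1 : HasFDerivAt e (fderiv ℝ e (e.symm y)) (e.symm y) :=
      ((hs _ hps).differentiableAt (by simp)).hasFDerivAt
    have e2 : HasFDerivAt e.symm (fderiv ℝ e.symm y) (e (e.symm y)) := by
      rw [e.right_inv hy']
      exact ((ht y hy').differentiableAt (by simp)).hasFDerivAt
    have e3 := e2.comp _ e1
    have e4 : (e.symm ∘ e) =ᶠ[𝓝 (e.symm y)] id := by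
      filter_upwards [e.open_source.mem_nhds hps] with z hz using e.left_inv hz
    have e5 := (e3.congr_of_eventuallyEq e4.symm).unique (hasFDerivAt_id _)
    exact congrArg (fun L : E3 →L[ℝ] E3 => L x) e5
  have hzero : ∀ y ∈ Metric.ball a ε, ∀ x : E3, x 1 = 0 →
      fderiv ℝ F (e.symm y) (fderiv ℝ e.symm y x) = 0 := by
    intro y hy x hx
    have hps := e.map_target (hb hy)
    have hdec : x = x 0 • Pi.single 0 1 + x 2 • (Pi.single 2 1 : E3) := by
      funext i
      fin_cases i <;> simp [hx]
    have k0 : fderiv ℝ e.symm y (Pi.single 0 1) = X (e.symm y) := by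
      rw [← hX _ hps, hinv y hy]
    have k2 : fderiv ℝ e.symm y (Pi.single 2 1) = Pi.single 2 1 := by
      conv_lhs => rw [← hz _ hps (Pi.single 2 1) (by simp) (by simp)]
      rw [hinv y hy]
    rw [hdec, map_add, map_smul, map_smul, k0, k2, map_add, map_smul, map_smul, hFX _ (hsU hps),
      zindep_fderiv F hFz _ (Pi.single 2 1) (by simp) (by simp)]
    simp
  have hseg : ∀ t ∈ Icc (0 : ℝ) 1, q + t • (q' - q) ∈ Metric.ball a ε := by
    intro t ht
    exact (convex_ball a ε).add_smul_sub_mem hq hq' ht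
  have hpath : ∀ t ∈ Icc (0 : ℝ) 1,
      HasDerivAt (fun t : ℝ => F (e.symm (q + t • (q' - q)))) 0 t := by
    intro t ht
    have l : HasDerivAt (fun t : ℝ => q + t • (q' - q)) (q' - q) t := by
      simpa using ((hasDerivAt_id t).smul_const (q' - q)).const_add q
    have := (hder _ (hseg t ht)).comp_hasDerivAt t l
    have h0 : ((fderiv ℝ F (e.symm (q + t • (q' - q)))).comp
        (fderiv ℝ e.symm (q + t • (q' - q)))) (q' - q) = 0 :=
      hzero _ (hseg t ht) _ (by simp [h1])
    rw [h0] at this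
    exact this
  have := constant_of_has_deriv_right_zero (f := fun t : ℝ => F (e.symm (q + t • (q' - q))))
    (a := 0) (b := 1)
    (fun t ht => (hpath t ht).continuousAt.continuousWithinAt)
    (fun t ht => (hpath t ⟨ht.1, ht.2.le⟩).hasDerivWithinAt) 1 (by simp)
  simpa using this.symm

lemma taylor_const (X : VF 3) (p : E3) (f : E3 → ℝ) (A : ℕ → E3 → ℝ) (t : ℝ)
    (hf : Differentiable ℝ f) (hA : ∀ k, Differentiable ℝ (A k)) (hfX : fderiv ℝ f p (X p) = 1)
    (hAX : ∀ k, fderiv ℝ (A k) p (X p) = A (k + 1) p) (n : ℕ) :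
    Differentiable ℝ (fun p => ∑ i ∈ Finset.range n, A i p * (i.factorial : ℝ)⁻¹ * (t - f p) ^ i) ∧
    fderiv ℝ (fun p => ∑ i ∈ Finset.range (n + 1), A i p * (i.factorial : ℝ)⁻¹ * (t - f p) ^ i) p (X p)
      = A (n + 1) p * (n.factorial : ℝ)⁻¹ * (t - f p) ^ n := by
  have hT : ∀ i, Differentiable ℝ (fun p => A i p * (i.factorial : ℝ)⁻¹ * (t - f p) ^ i) := by
    intro i
    have := hA i
    fun_prop
  refine ⟨Differentiable.fun_sum fun i _ => hT i, ?_⟩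
  have hterm : ∀ i, fderiv ℝ (fun p => A i p * (i.factorial : ℝ)⁻¹ * (t - f p) ^ i) p (X p) =
      A (i + 1) p * (i.factorial : ℝ)⁻¹ * (t - f p) ^ i -
        A i p * (i.factorial : ℝ)⁻¹ * (i * (t - f p) ^ (i - 1)) := by
    intro i
    have d1 := ((hA i) p).hasFDerivAt.mul_const ((i.factorial : ℝ)⁻¹)
    have d2 := ((((hf p).hasFDerivAt).const_sub t).pow i)
    have d3 := (d1.mul d2).fderiv
    have d4 : ((fun y => A i y * (i.factorial : ℝ)⁻¹) * (fun y => t - f y) ^ i) =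
      fun p => A i p * (i.factorial : ℝ)⁻¹ * (t - f p) ^ i := rfl
    have d5 := congrArg (fun L : E3 →L[ℝ] ℝ => L (X p)) d3
    simp [hfX, hAX] at d5
    refine Eq.trans ?_ (d5.trans ?_)
    · rfl
    · ring
  have hsum : ∀ m, fderiv ℝ (fun p => ∑ i ∈ Finset.range m, A i p * (i.factorial : ℝ)⁻¹ * (t - f p) ^ i) p (X p)
      = ∑ i ∈ Finset.range m, fderiv ℝ (fun p => A i p * (i.factorial : ℝ)⁻¹ * (t - f p) ^ i) p (X p) := by
    intro m
    rw [fderiv_fun_sum fun i _ => hT i p]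
    simp
  rw [hsum]
  induction n with
  | zero => simp [hterm]
  | succ n ih =>
    rw [Finset.sum_range_succ, ih, hterm]
    have : (n.factorial : ℝ) ≠ 0 := by exact_mod_cast n.factorial_ne_zero
    simp only [Nat.factorial_succ, Nat.add_sub_cancel]
    push_cast
    field_simp
    ring

open Polynomial in
/-- Taylor polynomial of the coefficient function along the flow -/
noncomputable def taylP (f : E3 → ℝ) (A : ℕ → E3 → ℝ) (N : ℕ) (p : E3) : ℝ[X] :=
  (X - C (f p)) ^ N + ∑ i ∈ Finset.range N, C (A i p * (i.factorial : ℝ)⁻¹) * (X - C (f p)) ^ i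

open Polynomial in
lemma taylP_deg_lt (f : E3 → ℝ) (A : ℕ → E3 → ℝ) (N : ℕ) (p : E3) :
    (∑ i ∈ Finset.range N, C (A i p * (i.factorial : ℝ)⁻¹) * (X - C (f p)) ^ i).degree <
      ((X - C (f p)) ^ N).degree := by
  rw [degree_pow, degree_X_sub_C]
  refine (degree_sum_le _ _).trans_lt ?_
  have h0 : N • (1 : WithBot ℕ) = (N : WithBot ℕ) := by simp
  rw [h0]
  refine (Finset.sup_lt_iff (WithBot.bot_lt_coe N)).2 ?_
  intro i hi
  have h2 : (C (A i p * (i.factorial : ℝ)⁻¹) * (X - C (f p)) ^ i).degree ≤ ((X - C (f p)) ^ i).degree := by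
    rw [C_mul']; exact degree_smul_le _ _
  refine h2.trans_lt ?_
  rw [degree_pow, degree_X_sub_C]
  have h1 : i • (1 : WithBot ℕ) = (i : WithBot ℕ) := by simp
  rw [h1]
  exact WithBot.coe_lt_coe.2 (Finset.mem_range.1 hi)

open Polynomial in
lemma taylP_monic (f : E3 → ℝ) (A : ℕ → E3 → ℝ) (N : ℕ) (p : E3) : (taylP f A N p).Monic :=
  ((monic_X_sub_C (f p)).pow N).add_of_left (taylP_deg_lt f A N p)

open Polynomial in
lemma taylP_deg (f : E3 → ℝ) (A : ℕ → E3 → ℝ) (N : ℕ) (p : E3) : (taylP f A N p).natDegree = N := by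
  unfold taylP
  rw [natDegree_add_eq_left_of_degree_lt (taylP_deg_lt f A N p), natDegree_pow, natDegree_X_sub_C,
    mul_one]

lemma taylP_eval (f : E3 → ℝ) (A : ℕ → E3 → ℝ) (N : ℕ) (p : E3)
    (hN : A N p = (N.factorial : ℝ)) (t : ℝ) : (taylP f A N p).eval t =
      ∑ i ∈ Finset.range (N + 1), A i p * (i.factorial : ℝ)⁻¹ * (t - f p) ^ i := by
  have : (N.factorial : ℝ) ≠ 0 := by exact_mod_cast N.factorial_ne_zero
  rw [Finset.sum_range_succ, hN, mul_inv_cancel₀ this]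
  simp [taylP, Polynomial.eval_finsetSum]
  ring

lemma taylP_smooth (f : E3 → ℝ) (A : ℕ → E3 → ℝ) (N : ℕ) (hf : ContDiff ℝ ∞ f)
    (hA : ∀ k, ContDiff ℝ ∞ (A k)) (j : ℕ) : ContDiff ℝ ∞ fun p => (taylP f A N p).coeff j := by
  simp only [taylP, Polynomial.coeff_add, Polynomial.finsetSum_coeff, Polynomial.coeff_C_mul,
    sub_eq_add_neg, ← Polynomial.C_neg, Polynomial.coeff_X_add_C_pow]
  refine ContDiff.add ((hf.neg.pow _).mul contDiff_const) (ContDiff.sum fun i _ => ?_)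
  exact ((hA i).mul contDiff_const).mul ((hf.neg.pow _).mul contDiff_const)

lemma polc_eq {N : ℕ} (c : Fin N → ℝ → ℝ) (s : ℝ) (Q : Polynomial ℝ) (hm : Q.Monic)
    (hd : Q.natDegree = N) (h : ∀ i : Fin N, c i s = Q.coeff i) : polc c s = Q := by
  conv_rhs => rw [hm.as_sum, hd]
  unfold polc
  rw [Finset.sum_range]
  simp only [h]

lemma coords (U : Set E3) (hU : IsOpen U) (p0 : E3) (hp0 : p0 ∈ U)
    (g : Submodule ℝ (VF 3)) (hsmooth : ∀ v ∈ g, ContDiff ℝ ∞ v)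
    (hbr : ∀ v ∈ g, ∀ w ∈ g, vbr v w ∈ g) (hz : ∀ v ∈ g, ZIndep v)
    (f : E3 → ℝ) (X : VF 3) (N : ℕ) (u : VF 3) (hf : ContDiff ℝ ∞ f) (hfz : ZIndep f)
    (hX : X ∈ g) (hu : u ∈ g) (hfX : ∀ p, fderiv ℝ f p (X p) = 1)
    (hhor : ∀ j, HorZero U (adPow X j u)) (htop : adPow X N u = (N.factorial : ℝ) • dd 2) :
    ∃ (e : OpenPartialHomeomorph E3 E3) (c : Fin N → ℝ → ℝ), (∀ i, ContDiff ℝ ∞ (c i)) ∧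
      e.source.Nonempty ∧ e.source ⊆ U ∧
      (∀ p ∈ e.source, ContDiffAt ℝ ∞ e p) ∧ (∀ q ∈ e.target, ContDiffAt ℝ ∞ e.symm q) ∧
      Transports e e.source X (dd 0) ∧
      ∀ j, Transports e e.source (adPow X j u) (adPow (dd 0) j (ufield (polc c))) := by
  obtain ⟨e, hps, hsU, hes, het, he0, heX, hez⟩ :=
    straighten U hU p0 hp0 f X hf hfz (hsmooth X hX) (hz X hX) hfX
  have hmem : ∀ j, adPow X j u ∈ g := adPow_mem g hbr X hX u hu
  let A : ℕ → E3 → ℝ := fun k p => adPow X k u p 2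
  have hAs : ∀ k, ContDiff ℝ ∞ (A k) := fun k =>
    (contDiff_apply ℝ ℝ (2 : Fin 3)).comp (hsmooth _ (hmem k))
  have hAz : ∀ k, ZIndep (A k) := fun k p p' h0 h1 => by
    show adPow X k u p 2 = adPow X k u p' 2
    rw [hz _ (hmem k) p p' h0 h1]
  have hAN : ∀ p, A N p = (N.factorial : ℝ) := fun p => by
    show adPow X N u p 2 = _
    rw [htop]; simp [dd]
  have hAN1 : ∀ p, A (N + 1) p = 0 := fun p => by
    show vbr X (adPow X N u) p 2 = 0
    rw [htop]
    have hd : Differentiable ℝ (dd 2 : VF 3) := differentiable_const _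
    rw [vbr_smul_right _ _ _ hd]
    have h1 : fderiv ℝ X p (dd 2 p) = 0 := zindep_fderiv X (hz X hX) p _ (by simp [dd]) (by simp [dd])
    have h2 : fderiv ℝ (dd 2 : VF 3) p = 0 := by
      unfold dd; exact fderiv_const_apply _
    simp [vbr, h1, h2]
  have hAX : ∀ p ∈ U, ∀ k, fderiv ℝ (A k) p (X p) = A (k + 1) p := fun p hp k =>
    (vbr_two X _ (hz X hX) ((hsmooth _ (hmem k)).differentiable (by simp)) p (hhor k p hp)).symm
  have hfd : Differentiable ℝ f := hf.differentiable (by simp)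
  have hAd : ∀ k, Differentiable ℝ (A k) := fun k => (hAs k).differentiable (by simp)
  set a := e p0 with ha
  obtain ⟨ε, hε, hball⟩ := Metric.isOpen_iff.1 e.open_target a (e.map_source hps)
  have hTconst : ∀ q ∈ Metric.ball a ε, ∀ q' ∈ Metric.ball a ε, q 1 = q' 1 →
      taylP f A N (e.symm q) = taylP f A N (e.symm q') := by
    intro q hq q' hq' h1
    apply Polynomial.funext
    intro t
    rw [taylP_eval f A N _ (hAN _), taylP_eval f A N _ (hAN _)]
    refine const_along U e X hsU hes het heX hez a ε hball
      (fun p => ∑ i ∈ Finset.range (N + 1), A i p * (i.factorial : ℝ)⁻¹ * (t - f p) ^ i)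
      ?_ ?_ ?_ q q' hq hq' h1
    · exact Differentiable.fun_sum fun i _ => by
        have := hAd i
        fun_prop
    · intro p p' h0 h1
      simp only [hfz p p' h0 h1, fun i => hAz i p p' h0 h1]
    · intro p hp
      rw [(taylor_const X p f A t hfd hAd (hfX p) (hAX p hp) N).2, hAN1]
      ring
  -- the coefficient functions
  have hcurve : ContDiff ℝ ∞ fun s : ℝ => Function.update a 1 s := by
    rw [contDiff_pi]
    intro i
    by_cases hi : i = 1
    · subst hi; simpa using contDiff_fun_id
    · simpa [Function.update_of_ne hi] using contDiff_const
  have hcb : ∀ δ, 0 < δ → ∀ s ∈ Metric.ball (a 1) δ, Function.update a 1 s ∈ Metric.ball a δ := by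
    intro δ hδ s hs
    rw [Metric.mem_ball, dist_pi_lt_iff hδ]
    intro i
    by_cases hi : i = 1
    · subst hi; simpa using hs
    · simpa [Function.update_of_ne hi] using hδ
  have hex : ∀ i : Fin N, ∃ c : ℝ → ℝ, ContDiff ℝ ∞ c ∧ HasCompactSupport c ∧
      ∀ s ∈ Metric.ball (a 1) (ε / 4), c s = (taylP f A N (e.symm (Function.update a 1 s))).coeff i := by
    intro i
    apply cutoff_ext (fun s => (taylP f A N (e.symm (Function.update a 1 s))).coeff i) (a 1) ε hε
    intro s hs
    have h1 := (taylP_smooth f A N hf hAs i).contDiffAt (x := e.symm (Function.update a 1 s))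
    have h2 := het _ (hball (hcb ε hε s hs))
    exact h1.comp s (h2.comp s hcurve.contDiffAt)
  choose c hc _ hceq using hex
  let V : Set E3 := Metric.ball a (ε / 4)
  have hVo : IsOpen V := Metric.isOpen_ball
  let W : Set E3 := e.source ∩ e ⁻¹' V
  have hWo : IsOpen W := e.isOpen_inter_preimage hVo
  have hpW : p0 ∈ W := ⟨hps, Metric.mem_ball_self (by linarith)⟩
  have hpol : ∀ p ∈ W, taylP f A N p = polc c (e p 1) := by
    intro p hp
    have hV : e p ∈ Metric.ball a (ε / 4) := hp.2
    have hs1 : e p 1 ∈ Metric.ball (a 1) (ε / 4) := by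
      rw [Metric.mem_ball] at hV ⊢
      exact (dist_le_pi_dist _ _ 1).trans_lt hV
    have hsub : ∀ {Y : Type} [PseudoMetricSpace Y] (y : Y), Metric.ball y (ε / 4) ⊆ Metric.ball y ε :=
      fun y => Metric.ball_subset_ball (by linarith)
    have h1 := hTconst (e p) (hsub _ hV) (Function.update a 1 (e p 1))
      (hcb ε hε _ (hsub _ hs1)) (by simp)
    rw [e.left_inv hp.1] at h1
    rw [h1]
    symm
    apply polc_eq _ _ _ (taylP_monic _ _ _ _) (taylP_deg _ _ _ _)
    intro i
    exact hceq i _ hs1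
  have hgood := polc_good c hc
  have hind : ∀ j, ∀ p ∈ W, A j p = adPow (dd 0) j (ufield (polc c)) (e p) 2 := by
    intro j
    induction j with
    | zero =>
      intro p hp
      show A 0 p = (polc c (e p 1)).eval (e p 0)
      rw [← hpol p hp, he0 p hp.1, taylP_eval _ _ _ _ (hAN p), Finset.sum_range_succ']
      simp
    | succ j ih =>
      intro p hp
      rw [← hAX p (hsU hp.1) j]
      have hj := adPow_ufield hgood j
      have hjd : Differentiable ℝ (adPow (dd 0) j (ufield (polc c))) := by
        rw [hj.1]; exact hj.2.smooth'.differentiable (by simp)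
      have hjd2 : Differentiable ℝ (fun q => adPow (dd 0) j (ufield (polc c)) q 2) := by
        intro q
        exact differentiableAt_pi.1 (hjd q) 2
      have hjh : HorZero univ (adPow (dd 0) j (ufield (polc c))) := by
        rw [hj.1]; exact ufield_hor _ _
      show _ = vbr (dd 0) (adPow (dd 0) j (ufield (polc c))) (e p) 2
      rw [vbr_two (dd 0) _ (fun _ _ _ _ => rfl) hjd _ (hjh _ (mem_univ _))]
      have hev : A j =ᶠ[𝓝 p] fun p => adPow (dd 0) j (ufield (polc c)) (e p) 2 := by
        filter_upwards [hWo.mem_nhds hp] with y hy using ih y hy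
      rw [hev.fderiv_eq]
      have hcomp := ((hjd2 (e p)).hasFDerivAt.comp p
        ((hes p hp.1).differentiableAt (by simp)).hasFDerivAt).fderiv
      have h3 : ((fun q => adPow (dd 0) j (ufield (polc c)) q 2) ∘ e) =
        fun p => adPow (dd 0) j (ufield (polc c)) (e p) 2 := rfl
      rw [h3] at hcomp
      rw [hcomp]
      show fderiv ℝ _ (e p) (fderiv ℝ e p (X p)) = _
      rw [heX p hp.1]; rfl
  refine ⟨e.restrOpen W hWo, c, hc, ?_, ?_, ?_, ?_, ?_, ?_⟩
  · rw [OpenPartialHomeomorph.restrOpen_source]; exact ⟨p0, hps, hpW⟩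
  · rw [OpenPartialHomeomorph.restrOpen_source]; exact fun p hp => hsU hp.1
  all_goals have hcoe : ((e.restrOpen W hWo : OpenPartialHomeomorph E3 E3) : E3 → E3) = e := rfl
  · rw [OpenPartialHomeomorph.restrOpen_source, hcoe]
    exact fun p hp => hes p hp.1
  · intro q hq
    exact het q hq.1
  · rw [OpenPartialHomeomorph.restrOpen_source, hcoe]
    exact fun p hp => heX p hp.1
  · rw [OpenPartialHomeomorph.restrOpen_source, hcoe]
    intro j p hp
    have h1 := hhor j p (hsU hp.1)
    rw [hez p hp.1 _ h1.1 h1.2]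
    have hjh : HorZero univ (adPow (dd 0) j (ufield (polc c))) := by
      rw [(adPow_ufield hgood j).1]; exact ufield_hor _ _
    have h2 := hjh (e p) (mem_univ _)
    funext i
    fin_cases i
    · exact h1.1.trans h2.1.symm
    · exact h1.2.trans h2.2.symm
    · exact hind j p hp.2

lemma rel_equiv {M : Type*} [AddCommGroup M] [Module ℝ M] (g G : Submodule ℝ M)
    (T : M → M → Prop) (hadd : ∀ v w v' w', T v w → T v' w' → T (v + v') (w + w'))
    (hsmul : ∀ (r : ℝ) v w, T v w → T (r • v) (r • w))
    (h1 : ∀ v ∈ g, ∃ w ∈ G, T v w) (h2 : ∀ w ∈ G, ∃ v ∈ g, T v w)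
    (h3 : ∀ v ∈ g, T v 0 → v = 0) (h4 : ∀ w ∈ G, T 0 w → w = 0) :
    ∃ e : g ≃ₗ[ℝ] G, ∀ v : g, T v.1 (e v).1 := by
  have hsub : ∀ v w v' w', T v w → T v' w' → T (v - v') (w - w') := by
    intro v w v' w' h h'
    have := hadd _ _ _ _ h (hsmul (-1) _ _ h')
    simpa [sub_eq_add_neg] using this
  have huniq : ∀ v, ∀ w ∈ G, ∀ w' ∈ G, T v w → T v w' → w = w' := by
    intro v w hw w' hw' h h'
    have := hsub _ _ _ _ h h'
    rw [sub_self] at this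
    exact sub_eq_zero.1 (h4 _ (G.sub_mem hw hw') this)
  choose F hF hFT using fun v : g => h1 v.1 v.2
  let L : g →ₗ[ℝ] G :=
    { toFun := fun v => ⟨F v, hF v⟩
      map_add' := fun v v' => Subtype.ext
        (huniq _ _ (hF _) _ (G.add_mem (hF v) (hF v')) (hFT (v + v')) (hadd _ _ _ _ (hFT v) (hFT v')))
      map_smul' := fun r v => Subtype.ext
        (huniq _ _ (hF _) _ (G.smul_mem r (hF v)) (hFT (r • v)) (hsmul r _ _ (hFT v))) }
  have hLT : ∀ v, T v.1 (L v).1 := hFT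
  refine ⟨LinearEquiv.ofBijective L ⟨?_, ?_⟩, fun v => hLT v⟩
  · rw [← LinearMap.ker_eq_bot, LinearMap.ker_eq_bot']
    intro v hv
    have := hLT v
    rw [hv] at this
    exact Subtype.ext (h3 v.1 v.2 this)
  · rintro ⟨w, hw⟩
    obtain ⟨v, hv, hvT⟩ := h2 w hw
    exact ⟨⟨v, hv⟩, Subtype.ext (huniq v _ (L ⟨v, hv⟩).2 _ hw (hLT ⟨v, hv⟩) hvT)⟩

lemma transports_sum (φ : E3 → E3) (S : Set E3) (n : ℕ) (a : ℕ → ℝ) (v w : ℕ → VF 3)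
    (h : ∀ j, Transports φ S (v j) (w j)) :
    Transports φ S (∑ j ∈ Finset.range n, a j • v j) (∑ j ∈ Finset.range n, a j • w j) := by
  intro p hp
  simp only [Finset.sum_apply, Pi.smul_apply, map_sum, map_smul]
  exact Finset.sum_congr rfl fun j _ => by rw [h j p hp]

lemma main_thm (U : Set (Fin 3 → ℝ)) (hU : IsOpen U)
    (g : Submodule ℝ (VF 3))
    (hsmooth : ∀ v ∈ g, ContDiff ℝ (⊤ : ℕ∞) v)
    (hbr : ∀ v ∈ g, ∀ w ∈ g, vbr v w ∈ g)
    (hnil : IsNilpotentVF g)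
    (hcen : centerSet g = ↑(Submodule.span ℝ ({dd 2} : Set (VF 3))))
    (hform : ∀ v ∈ g, ∃ P Q R : ℝ → ℝ → ℝ,
      v = fun p => ![P (p 0) (p 1), Q (p 0) (p 1), R (p 0) (p 1)])
    (hrank1 : HasRankOn ((g.map Pzl : Submodule ℝ (VF 3)) : Set (VF 3)) U 1)
    (hker : ∃ v ∈ g, Pzl v = 0 ∧
      ∃ p q : Fin 3 → ℝ, p 1 = q 1 ∧ p 2 = q 2 ∧ v p 2 ≠ v q 2) :
    ∃ U' V : Set (Fin 3 → ℝ), ∃ φ : (Fin 3 → ℝ) → (Fin 3 → ℝ),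
      U'.Nonempty ∧ U' ⊆ U ∧ IsDiffeoOn φ U' V ∧
      ∃ N : ℕ, ∃ c : Fin N → ℝ → ℝ, (∀ i, ContDiff ℝ (⊤ : ℕ∞) (c i)) ∧
        ∃ e : g ≃ₗ[ℝ] ↥(Submodule.span ℝ ({dd 0} ∪ (modelK c : Set (VF 3)))),
          ∀ v : g, Transports φ U' v.1 (e v).1 := by
  have hz : ∀ v ∈ g, ZIndep v := by
    intro v hv p p' h0 h1
    obtain ⟨P, Q, R, rfl⟩ := hform v hv
    simp [h0, h1]
  obtain ⟨hinj, f, X, N, u, hf, hfz, hX, hu, hfX, hhor, htop, hspan⟩ :=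
    algebra_part U hU g hsmooth hbr hnil hcen hz hrank1 hker
  obtain ⟨p0, hp0, -⟩ := hrank1.2
  obtain ⟨e, c, hc, hne, hsU, hes, het, hTX, hTj⟩ :=
    coords U hU p0 hp0 g hsmooth hbr hz f X N u hf hfz hX hu hfX hhor htop
  refine ⟨e.source, e.target, e, hne, hsU, ⟨e.open_source, e.open_target,
    fun p hp => (hes p hp).contDiffWithinAt, e.bijOn, e.symm,
    fun p hp => (het p hp).contDiffWithinAt, fun p hp => e.left_inv hp⟩, N, c, hc, ?_⟩
  have hmem : ∀ j, adPow X j u ∈ g := adPow_mem g hbr X hX u hu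
  refine rel_equiv g _ (Transports e e.source) ?_ ?_ ?_ ?_ ?_ ?_
  · intro v w v' w' h h' p hp
    simp only [Pi.add_apply, map_add, h p hp, h' p hp]
  · intro r v w h p hp
    simp only [Pi.smul_apply, map_smul, h p hp]
  · intro v hv
    obtain ⟨b, hb⟩ := hspan v hv
    rw [Submodule.mem_span_range_iff_exists_fun] at hb
    obtain ⟨a, ha⟩ := hb
    let a' : ℕ → ℝ := fun j => if h : j < N + 1 then a ⟨j, h⟩ else 0
    have ha' : ∑ j ∈ Finset.range (N + 1), a' j • adPow X j u = v - b • X := by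
      rw [Finset.sum_range, ← ha]
      simp only [a', Fin.is_lt, dif_pos, Fin.eta]
    refine ⟨b • dd 0 + ∑ j ∈ Finset.range (N + 1), a' j • adPow (dd 0) j (ufield (polc c)),
      (mem_modelG c _).2 ⟨b, _, Submodule.sum_mem _ fun j hj => Submodule.smul_mem _ _
        (adPow_mem_modelK c j (by have := Finset.mem_range.1 hj; omega)), rfl⟩, ?_⟩
    have hv' : v = b • X + ∑ j ∈ Finset.range (N + 1), a' j • adPow X j u := by
      rw [ha']; abel
    intro p hp
    have h1 := transports_sum e e.source (N + 1) a' _ _ hTj p hp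
    rw [hv']
    simp only [Pi.add_apply, Pi.smul_apply, map_add, map_smul, hTX p hp]
    rw [h1]
  · intro w hw
    obtain ⟨b, k, hk, rfl⟩ := (mem_modelG c w).1 hw
    obtain ⟨a, rfl⟩ := mem_modelK c k hk
    refine ⟨b • X + ∑ j ∈ Finset.range (N + 1), a j • adPow X j u,
      g.add_mem (g.smul_mem _ hX) (g.sum_mem fun j _ => g.smul_mem _ (hmem j)), ?_⟩
    intro p hp
    have h1 := transports_sum e e.source (N + 1) a _ _ hTj p hp
    simp only [Pi.add_apply, Pi.smul_apply, map_add, map_smul, hTX p hp]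
    rw [h1]
  · intro v hv hT
    refine hinj v hv e.source e.open_source hne ?_
    intro p hp
    have h0 : fderiv ℝ e p (v p) = 0 := hT p hp
    have e1 : HasFDerivAt e (fderiv ℝ e p) p := ((hes _ hp).differentiableAt (by simp)).hasFDerivAt
    have e2 : HasFDerivAt e.symm (fderiv ℝ e.symm (e p)) (e p) :=
      ((het _ (e.map_source hp)).differentiableAt (by simp)).hasFDerivAt
    have e4 : (e.symm ∘ e) =ᶠ[𝓝 p] id := by
      filter_upwards [e.open_source.mem_nhds hp] with z hz using e.left_inv hz
    have e5 := ((e2.comp _ e1).congr_of_eventuallyEq e4.symm).unique (hasFDerivAt_id _)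
    have e6 := congrArg (fun L : E3 →L[ℝ] E3 => L (v p)) e5
    have e7 : fderiv ℝ e.symm (e p) (fderiv ℝ e p (v p)) = v p := e6
    rw [h0, map_zero] at e7
    exact e7.symm
  · intro w hw hT
    obtain ⟨b, k, hk, rfl⟩ := (mem_modelG c w).1 hw
    obtain ⟨a, rfl⟩ := mem_modelK c k hk
    have := model_zero c hc e.target e.open_target 
      (hne.elim fun p hp => ⟨e p, e.map_source hp⟩) b a ?_
    · rw [this.1, zero_smul, zero_add]
      exact Finset.sum_eq_zero fun j hj => by
        rw [this.2 j (by have := Finset.mem_range.1 hj; omega), zero_smul]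
    · intro q hq
      have h1 := hT (e.symm q) (e.map_target hq)
      rw [e.right_inv hq] at h1
      rw [← h1]
      simp

end Helpers

/-- Theorem 3(b): with g as in Theorem 3 and Π(g) of rank 1, if ker(Π|_g)
contains an element whose coefficient has positive degree in x, then ad(∂_x) on ker(Π|_g)
has exactly one Jordan block, and in suitable local coordinates g = ⟨∂_x⟩ ⋉ A, where the
abelian ideal A = ker(Π|_g) is generated under ad(∂_x) by the single element
(x^N + φ₁(y)x^{N-1} + ⋯ + φ_N(y))∂_z. -/
theorem statement13 (U : Set (Fin 3 → ℝ)) (hU : IsOpen U)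
    (g : Submodule ℝ (VF 3))
    (hsmooth : ∀ v ∈ g, ContDiff ℝ (⊤ : ℕ∞) v)
    (hbr : ∀ v ∈ g, ∀ w ∈ g, vbr v w ∈ g)
    (hfd : FiniteDimensional ℝ g)
    (hnil : IsNilpotentVF g)
    (hnab : ¬ IsAbelianSet (g : Set (VF 3)))
    -- the center is one-dimensional, equal to ⟨∂_z⟩
    (hcen : centerSet g = ↑(Submodule.span ℝ ({dd 2} : Set (VF 3))))
    -- every element of g has the form P(x,y)∂_x + Q(x,y)∂_y + R(x,y)∂_z
    (hform : ∀ v ∈ g, ∃ P Q R : ℝ → ℝ → ℝ,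
      v = fun p => ![P (p 0) (p 1), Q (p 0) (p 1), R (p 0) (p 1)])
    -- Π(g) has rank 1
    (hrank1 : HasRankOn ((g.map Pzl : Submodule ℝ (VF 3)) : Set (VF 3)) U 1)
    -- some element of ker(Π|_g) has coefficient of positive degree in x
    (hker : ∃ v ∈ g, Pzl v = 0 ∧
      ∃ p q : Fin 3 → ℝ, p 1 = q 1 ∧ p 2 = q 2 ∧ v p 2 ≠ v q 2) :
    ∃ U' V : Set (Fin 3 → ℝ), ∃ φ : (Fin 3 → ℝ) → (Fin 3 → ℝ),
      U'.Nonempty ∧ U' ⊆ U ∧ IsDiffeoOn φ U' V ∧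
      ∃ N : ℕ, ∃ c : Fin N → ℝ → ℝ, (∀ i, ContDiff ℝ (⊤ : ℕ∞) (c i)) ∧
      ∃ u : VF 3,
        -- the single generator (x^N + φ₁(y)x^{N-1} + ⋯ + φ_N(y))∂_z
        u = (fun p => ![(0 : ℝ), (0 : ℝ),
              (p 0) ^ N + ∑ i : Fin N, c i (p 1) * (p 0) ^ (i : ℕ)]) ∧
      ∃ K' : Submodule ℝ (VF 3),
        -- A = ker(Π|_g) is the single Jordan chain of ad(∂_x) generated by u
        K' = Submodule.span ℝ
            (Set.range fun j : Fin (N + 1) => adPow (dd 0) (j : ℕ) u) ∧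
        LinearIndependent ℝ (fun j : Fin (N + 1) => adPow (dd 0) (j : ℕ) u) ∧
        adPow (dd 0) (N + 1) u = 0 ∧
        IsAbelianSet (K' : Set (VF 3)) ∧
        dd 0 ∉ K' ∧
        K' = Submodule.span ℝ ({dd 0} ∪ (K' : Set (VF 3))) ⊓ LinearMap.ker Pzl ∧
        (∀ v ∈ Submodule.span ℝ ({dd 0} ∪ (K' : Set (VF 3))), ∀ a ∈ K', vbr v a ∈ K') ∧
        -- the change of coordinates maps g isomorphically onto ⟨∂_x⟩ ⋉ K'
        ∃ e : g ≃ₗ[ℝ] ↥(Submodule.span ℝ ({dd 0} ∪ (K' : Set (VF 3)))),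
          ∀ v : g, Transports φ U' v.1 (e v).1 := by
  obtain ⟨U', V, φ, hne, hsub, hφ, N, c, hc, e, he⟩ :=
    main_thm U hU g hsmooth hbr hnil hcen hform hrank1 hker
  refine ⟨U', V, φ, hne, hsub, hφ, N, c, hc, ufield (polc c), ?_, modelK c, rfl, ?_⟩
  · funext p
    simp only [ufield, polc_eval]
  · obtain ⟨h1, h2, h3, h4, h5, h6⟩ := model_part c hc
    exact ⟨h1, h2, h3, h4, h5, h6, e, he⟩
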